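/- arXiv:2009.01946 — 8 statements merged into one kernel-verified Lean document; each statement's English description precedes it below -/
import Mathlib

section
/- Let A, B, C be a nondegenerate acute triangle in the Euclidean plane with side lengths a = dist B C, b = dist C A, c = dist A B (so b²+c²−a², c²+a²−b², a²+b²−c² are all positive). Let H₁, H₂, H₃ be the feet of the altitudes (H₁ the orthogonal projection of A onto line BC, H₂ of B onto line CA, H₃ of C onto line AB), let H be the orthocenter, O the circumcenter, E = midpoint(O, H) the nine-point center, Sy the symmedian point of ABC, G_h the centroid of H₁H₂H₃, Sy_h the symmedian point of the orthic triangle H₁H₂H₃, and GOT the barycentric combination of A, B, C with weights (a²/(b²+c²−a²), b²/(c²+a²−b²), c²/(a²+b²−c²)). Then there exists a nonzero real polynomial in two variables of total degree at most 3 vanishing at all fifteen points: A, B, C, H₁, H₂, H₃, the three midpoints of the segments H₂H₃, H₃H₁, H₁H₂, H, E, G_h, Sy, Sy_h, and GOT. -/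
open EuclideanGeometry RealInnerProductSpace

/-- The barycentric combination of three points with weights `u, v, w`. -/
noncomputable def bary (P Q R : EuclideanSpace ℝ (Fin 2)) (u v w : ℝ) :
    EuclideanSpace ℝ (Fin 2) :=
  (u / (u + v + w)) • P + (v / (u + v + w)) • Q + (w / (u + v + w)) • R

/-- Evaluation of a two-variable real polynomial at a point of the plane. -/
noncomputable def mvEval (f : MvPolynomial (Fin 2) ℝ)
    (p : EuclideanSpace ℝ (Fin 2)) : ℝ :=
  MvPolynomial.eval (fun i => p i) f

/-!
The fifteen points lie on a pivotal isocubic whose pivot is the orthocenter `H`: the locus of the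
points `P` that are collinear with `H` and the isoconjugate of `P`, for an isoconjugation with
suitable pole. Any such cubic passes through the vertices, through `H`, and through the feet of the
altitudes, which are the cevian traces of `H`. The pole is chosen so that the isoconjugation
exchanges the nine-point center with the homothetic center `GOT`, the symmedian points of the
triangle and of its orthic triangle, and `H` with the centroid of the orthic triangle; the first two
pairs are collinear with `H`, so all these points lie on the cubic. The midpoints of the sides of
the orthic triangle are likewise collinear with `H` and their isoconjugates. In Conway's symbols
`S_A, S_B, S_C` everything is a polynomial identity, and by cyclic symmetry each orbit of points has
to be treated only once.
-/

section Barycenter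

variable {κ V : Type*} [Fintype κ] [AddCommGroup V] [Module ℝ V]

/-- `p` has homogeneous barycentric coordinates `m` with respect to the points `t`. The
denominator is cleared, so that barycenters can be computed by linear combination; the sum
condition excludes points at infinity. -/
structure IsBarycenter (t : κ → V) (m : κ → ℝ) (p : V) : Prop where
  sum_ne_zero : ∑ k, m k ≠ 0
  sum_smul : (∑ k, m k) • p = ∑ k, m k • t k

theorem IsBarycenter.smul {t : κ → V} {m : κ → ℝ} {p : V} {r : ℝ} (hr : r ≠ 0)
    (h : IsBarycenter t m p) : IsBarycenter t (r • m) p where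
  sum_ne_zero := by simpa [← Finset.mul_sum, hr] using h.sum_ne_zero
  sum_smul := by simp [← Finset.mul_sum, mul_smul, ← Finset.smul_sum, h.sum_smul]

theorem isBarycenter_fin_three_iff {A B C p : V} {u v w : ℝ} :
    IsBarycenter ![A, B, C] ![u, v, w] p ↔
      u + v + w ≠ 0 ∧ (u + v + w) • p = u • A + v • B + w • C :=
  ⟨fun h ↦ by simpa [Fin.sum_univ_three] using And.intro h.sum_ne_zero h.sum_smul,
    fun h ↦ ⟨by simpa [Fin.sum_univ_three] using h.1, by simpa [Fin.sum_univ_three] using h.2⟩⟩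

theorem IsBarycenter.rotate {A B C p : V} {u v w : ℝ}
    (h : IsBarycenter ![B, C, A] ![v, w, u] p) : IsBarycenter ![A, B, C] ![u, v, w] p := by
  rw [isBarycenter_fin_three_iff] at h ⊢
  rwa [add_assoc, add_comm u, add_assoc (u • A), add_comm (u • A)]

theorem isBarycenter_bary {A B C : EuclideanSpace ℝ (Fin 2)} {u v w : ℝ} (h : u + v + w ≠ 0) :
    IsBarycenter ![A, B, C] ![u, v, w] (bary A B C u v w) :=
  isBarycenter_fin_three_iff.2 ⟨h, by
    simp only [bary, smul_add, smul_smul, mul_div_cancel₀ _ h]⟩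

theorem IsBarycenter.coord_eq {b : AffineBasis κ ℝ V} {m : κ → ℝ} {p : V}
    (h : IsBarycenter b m p) (k : κ) : b.coord k p = (∑ j, m j)⁻¹ * m k := by
  have hw : ∑ j, (∑ i, m i)⁻¹ * m j = 1 := by
    rw [← Finset.mul_sum, inv_mul_cancel₀ h.sum_ne_zero]
  have hp : p = Finset.univ.affineCombination ℝ b fun j ↦ (∑ i, m i)⁻¹ * m j := by
    rw [Finset.affineCombination_eq_linear_combination _ _ _ hw]
    simp only [mul_smul, ← Finset.smul_sum, ← h.sum_smul, inv_smul_smul₀ h.sum_ne_zero]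
  rw [hp, b.coord_apply_combination_of_mem (Finset.mem_univ k) hw]

end Barycenter

section Cartesian

open MvPolynomial

variable {ι κ : Type*}

theorem totalDegree_bind₁_le {R : Type*} [CommSemiring R] (F : MvPolynomial κ R)
    {g : κ → MvPolynomial ι R} (hg : ∀ k, (g k).totalDegree ≤ 1) :
    (bind₁ g F).totalDegree ≤ F.totalDegree := by
  rw [bind₁, aeval_def, eval₂_eq]
  refine totalDegree_finsetSum_le fun d hd ↦ ?_
  have hmonomial : (∏ k ∈ d.support, g k ^ d k).totalDegree ≤ d.degree :=
    (totalDegree_finsetProd _ _).trans <| Finset.sum_le_sum fun k _ ↦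
      (totalDegree_pow _ _).trans (mul_le_of_le_one_right' (hg k))
  calc (C (coeff d F) * ∏ k ∈ d.support, g k ^ d k).totalDegree
      ≤ (C (coeff d F)).totalDegree + (∏ k ∈ d.support, g k ^ d k).totalDegree :=
        totalDegree_mul _ _
    _ ≤ d.degree := by rwa [totalDegree_C, zero_add]
    _ ≤ F.totalDegree := le_totalDegree hd

theorem eval_smul_of_isHomogeneous {R : Type*} [CommSemiring R] {F : MvPolynomial κ R} {n : ℕ}
    (hF : F.IsHomogeneous n) (r : R) (m : κ → R) : eval (r • m) F = r ^ n * eval m F := by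
  rw [eval_eq, eval_eq, Finset.mul_sum]
  refine Finset.sum_congr rfl fun d hd ↦ ?_
  simp only [Pi.smul_apply, smul_eq_mul, mul_pow, Finset.prod_mul_distrib,
    Finset.prod_pow_eq_pow_sum, ← hF.degree_eq_sum_deg_support hd]
  ring

variable [Fintype ι]

/-- The polynomial of degree at most one, in the Cartesian coordinates, that represents `φ`. -/
noncomputable def affinePolynomial (φ : EuclideanSpace ℝ ι →ᵃ[ℝ] ℝ) : MvPolynomial ι ℝ :=
  C (φ 0) + ∑ i, C (φ.linear (EuclideanSpace.basisFun ι ℝ i)) * X i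

theorem totalDegree_affinePolynomial_le (φ : EuclideanSpace ℝ ι →ᵃ[ℝ] ℝ) :
    (affinePolynomial φ).totalDegree ≤ 1 := by
  refine (totalDegree_add _ _).trans (max_le (by simp) ?_)
  exact totalDegree_finsetSum_le fun i _ ↦ (isHomogeneous_C_mul_X _ i).totalDegree_le

theorem eval_affinePolynomial (φ : EuclideanSpace ℝ ι →ᵃ[ℝ] ℝ) (p : EuclideanSpace ℝ ι) :
    eval (fun i ↦ p i) (affinePolynomial φ) = φ p := by
  have hp : φ.linear p = ∑ i, p i * φ.linear (EuclideanSpace.basisFun ι ℝ i) := by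
    conv_lhs => rw [← (EuclideanSpace.basisFun ι ℝ).sum_repr p]
    simp
  calc eval (fun i ↦ p i) (affinePolynomial φ)
      = φ 0 + φ.linear p := by simp [affinePolynomial, hp, mul_comm]
    _ = φ p := by simpa [add_comm] using (φ.map_vadd 0 p).symm

variable [Fintype κ]

theorem exists_eval_ne_zero_and_sum_ne_zero {R : Type*} [CommRing R] [IsDomain R] [Infinite R]
    [Nonempty κ] {F : MvPolynomial κ R} (hF : F ≠ 0) :
    ∃ m : κ → R, eval m F ≠ 0 ∧ ∑ k, m k ≠ 0 := by
  classical
  have hX : (∑ k, X k : MvPolynomial κ R) ≠ 0 := fun h ↦ by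
    obtain ⟨k⟩ := ‹Nonempty κ›
    simpa using congr_arg (eval (Pi.single k 1)) h
  by_contra! h
  refine mul_ne_zero hF hX (MvPolynomial.funext fun m ↦ ?_)
  simpa [or_iff_not_imp_left] using h m

theorem exists_eval_eq_zero_of_isBarycenter (b : AffineBasis κ ℝ (EuclideanSpace ℝ ι))
    {F : MvPolynomial κ ℝ} {n : ℕ} (hF : F.IsHomogeneous n) (hF₀ : F ≠ 0) :
    ∃ f : MvPolynomial ι ℝ, f ≠ 0 ∧ f.totalDegree ≤ n ∧
      ∀ m p, IsBarycenter b m p → eval m F = 0 → eval (fun i ↦ p i) f = 0 := by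
  set f := bind₁ (fun k ↦ affinePolynomial (b.coord k)) F
  have eval_f {m p} (h : IsBarycenter b m p) :
      eval (fun i ↦ p i) f = (∑ k, m k)⁻¹ ^ n * eval m F :=
    calc eval (fun i ↦ p i) f
        = eval (fun k ↦ eval (fun i ↦ p i) (affinePolynomial (b.coord k))) F :=
          eval₂Hom_bind₁ _ _ _ F
      _ = eval ((∑ k, m k)⁻¹ • m) F := by
          simp only [eval_affinePolynomial, h.coord_eq]; rfl
      _ = (∑ k, m k)⁻¹ ^ n * eval m F := eval_smul_of_isHomogeneous hF _ _
  refine ⟨f, ?_, ?_, fun m p h hm ↦ by rw [eval_f h, hm, mul_zero]⟩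
  · have := b.nonempty
    obtain ⟨m, hFm, hm⟩ := exists_eval_ne_zero_and_sum_ne_zero hF₀
    have hp : IsBarycenter b m ((∑ k, m k)⁻¹ • ∑ k, m k • b k) := ⟨hm, smul_inv_smul₀ hm _⟩
    intro hf₀
    have := eval_f hp
    rw [hf₀, map_zero] at this
    exact mul_ne_zero (pow_ne_zero n (inv_ne_zero hm)) hFm this.symm
  · exact (totalDegree_bind₁_le F fun k ↦ totalDegree_affinePolynomial_le _).trans
      hF.totalDegree_le

end Cartesian

section PivotalCubic

open MvPolynomial Matrix

variable {R : Type*} [CommRing R]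

/-- The isoconjugate of `P` with pole `ω`, that is `(ω 0 / P 0 : ω 1 / P 1 : ω 2 / P 2)` with
denominators cleared. -/
def isoconjugate (ω P : Fin 3 → R) : Fin 3 → R :=
  ![ω 0 * (P 1 * P 2), ω 1 * (P 2 * P 0), ω 2 * (P 0 * P 1)]

/-- The ternary cubic form of the pivotal isocubic with pole `ω` and pivot `π`: it vanishes at `P`
when `P` and its isoconjugate are collinear with `π`. -/
def pivotalForm (ω π P : Fin 3 → R) : R := π ⬝ᵥ P ⨯₃ isoconjugate ω P

theorem pivotalForm_eq (ω π P : Fin 3 → R) :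
    pivotalForm ω π P = π 0 * (P 0 * (ω 2 * P 1 ^ 2 - ω 1 * P 2 ^ 2)) +
      π 1 * (P 1 * (ω 0 * P 2 ^ 2 - ω 2 * P 0 ^ 2)) +
      π 2 * (P 2 * (ω 1 * P 0 ^ 2 - ω 0 * P 1 ^ 2)) := by
  simp only [pivotalForm, isoconjugate, vec3_dotProduct, cross_apply, cons_val]
  ring

theorem pivotalForm_vertex (ω π : Fin 3 → R) : pivotalForm ω π ![1, 0, 0] = 0 := by
  simp [pivotalForm_eq]

theorem pivotalForm_pivot (ω π : Fin 3 → R) : pivotalForm ω π π = 0 :=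
  dot_self_cross _ _

theorem pivotalForm_cevian_trace (ω : Fin 3 → R) {u v w v' w' : R} (h : v * w' = w * v') :
    pivotalForm ω ![u, v, w] ![0, v', w'] = 0 := by
  simp only [pivotalForm_eq, cons_val]
  linear_combination w' * v' * ω 0 * h

theorem pivotalForm_eq_zero_of_isoconjugate_eq_smul {ω π P Q : Fin 3 → R} {k : R}
    (hQ : isoconjugate ω P = k • Q) (h : π ⬝ᵥ P ⨯₃ Q = 0) : pivotalForm ω π P = 0 := by
  rw [pivotalForm, hQ, map_smul, dotProduct_smul, h, smul_zero]

/-- `pivotalForm` as a polynomial in the homogeneous barycentric coordinates. -/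
noncomputable def pivotalCubic (ω π : Fin 3 → R) : MvPolynomial (Fin 3) R :=
  pivotalForm (C ∘ ω) (C ∘ π) X

theorem eval_pivotalCubic (ω π P : Fin 3 → R) :
    eval P (pivotalCubic ω π) = pivotalForm ω π P := by
  simp only [pivotalCubic, pivotalForm_eq, Function.comp_apply, map_add, map_sub, map_mul, map_pow,
    eval_C, eval_X]

theorem pivotalCubic_isHomogeneous (ω π : Fin 3 → R) : (pivotalCubic ω π).IsHomogeneous 3 := by
  have hterm (r s t : R) (i j k : Fin 3) :
      (C r * (X i * (C s * X j ^ 2 - C t * X k ^ 2)) :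
        MvPolynomial (Fin 3) R).IsHomogeneous 3 :=
    ((isHomogeneous_X R i).mul
      (((isHomogeneous_X_pow j 2).C_mul s).sub ((isHomogeneous_X_pow k 2).C_mul t))).C_mul r
  rw [pivotalCubic, pivotalForm_eq]
  exact ((hterm ..).add (hterm ..)).add (hterm ..)

theorem pivotalCubic_ne_zero [IsDomain R] [CharZero R] {ω π : Fin 3 → R} (hω : ω ≠ 0)
    (hπ : ∀ i, π i ≠ 0) : pivotalCubic ω π ≠ 0 := by
  intro h
  have hform (u v w : R) : pivotalForm ω π ![u, v, w] = 0 := by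
    rw [← eval_pivotalCubic, h, map_zero]
  simp only [pivotalForm_eq, cons_val] at hform
  have h₀ : 2 * π 1 * ω 0 = 0 := by linear_combination hform 0 1 1 + hform 0 1 (-1)
  have h₁ : 2 * π 2 * ω 1 = 0 := by linear_combination hform 1 0 1 + hform (-1) 0 1
  have h₂ : 2 * π 0 * ω 2 = 0 := by linear_combination hform 1 1 0 + hform 1 (-1) 0
  refine hω (funext fun i ↦ ?_)
  fin_cases i <;> simp_all

/-- The pole of the orthic cubic of a triangle in terms of its Conway symbols. It is chosen so that
isoconjugation exchanges the nine-point center with the homothetic center of the orthic and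
tangential triangles, the symmedian point with that of the orthic triangle, and the orthocenter
with the centroid of the orthic triangle. -/
def orthicPole (x y z : R) : Fin 3 → R :=
  ![(y + z) * (y * z) * (x * (y + z) + 2 * (y * z)),
    (z + x) * (z * x) * (y * (z + x) + 2 * (z * x)),
    (x + y) * (x * y) * (z * (x + y) + 2 * (x * y))]

theorem orthicPole_ne_zero [IsDomain R] [CharZero R] {x y z : R} (hx : x ≠ 0) (hy : y ≠ 0)
    (hz : z ≠ 0) (hyz : y + z ≠ 0) (hzx : z + x ≠ 0) (hxy : x + y ≠ 0)
    (hT : x * y + y * z + z * x ≠ 0) : orthicPole x y z ≠ 0 := by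
  intro h
  have h₀ : x * (y + z) + 2 * (y * z) = 0 := by simpa [orthicPole, *] using congr_fun h 0
  have h₁ : y * (z + x) + 2 * (z * x) = 0 := by simpa [orthicPole, *] using congr_fun h 1
  have h₂ : z * (x + y) + 2 * (x * y) = 0 := by simpa [orthicPole, *] using congr_fun h 2
  have h₃ : 4 * (x * y + y * z + z * x) = 0 := by linear_combination h₀ + h₁ + h₂
  simp_all

/-- The ternary cubic form of the pivotal isocubic with pole `orthicPole` and with pivot the
orthocenter, for a triangle with Conway symbols `x, y, z`. -/
def orthicForm (x y z : R) (P : Fin 3 → R) : R :=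
  pivotalForm (orthicPole x y z) ![y * z, z * x, x * y] P

theorem orthicForm_rotate (x y z u v w : R) :
    orthicForm y z x ![v, w, u] = orthicForm x y z ![u, v, w] := by
  simp only [orthicForm, orthicPole, pivotalForm_eq, cons_val]
  ring

theorem orthicForm_eq_zero {x y z u v w u' v' w' k : R}
    (hu : (y + z) * (y * z) * (x * (y + z) + 2 * (y * z)) * (v * w) = k * u')
    (hv : (z + x) * (z * x) * (y * (z + x) + 2 * (z * x)) * (w * u) = k * v')
    (hw : (x + y) * (x * y) * (z * (x + y) + 2 * (x * y)) * (u * v) = k * w')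
    (h : y * z * (v * w' - w * v') + z * x * (w * u' - u * w') + x * y * (u * v' - v * u') = 0) :
    orthicForm x y z ![u, v, w] = 0 := by
  refine pivotalForm_eq_zero_of_isoconjugate_eq_smul (k := k) (Q := ![u', v', w']) ?_ ?_
  · simp [isoconjugate, orthicPole, hu, hv, hw]
  · simpa [vec3_dotProduct, cross_apply, ← add_assoc] using h

theorem orthicForm_symmedian (x y z : R) : orthicForm x y z ![y + z, z + x, x + y] = 0 :=
  orthicForm_eq_zero (k := (y + z) * (z + x) * (x + y))
    (u' := y * z * (x * (y + z) + 2 * (y * z)))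
    (v' := z * x * (y * (z + x) + 2 * (z * x)))
    (w' := x * y * (z * (x + y) + 2 * (x * y)))
    (by ring) (by ring) (by ring) (by ring)

theorem orthicForm_orthic_symmedian (x y z : R) :
    orthicForm x y z ![y * z * (x * (y + z) + 2 * (y * z)),
      z * x * (y * (z + x) + 2 * (z * x)), x * y * (z * (x + y) + 2 * (x * y))] = 0 :=
  orthicForm_eq_zero (u' := y + z) (v' := z + x) (w' := x + y)
    (k := y * z * (x * (y + z) + 2 * (y * z)) * (z * x * (y * (z + x) + 2 * (z * x))) *
      (x * y * (z * (x + y) + 2 * (x * y))))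
    (by ring) (by ring) (by ring) (by ring)

theorem orthicForm_ninePointCenter (x y z : R) :
    orthicForm x y z ![x * (y + z) + 2 * (y * z), y * (z + x) + 2 * (z * x),
      z * (x + y) + 2 * (x * y)] = 0 :=
  orthicForm_eq_zero (u' := (y + z) * (y * z)) (v' := (z + x) * (z * x)) (w' := (x + y) * (x * y))
    (k := (x * (y + z) + 2 * (y * z)) * (y * (z + x) + 2 * (z * x)) *
      (z * (x + y) + 2 * (x * y)))
    (by ring) (by ring) (by ring) (by ring)

theorem orthicForm_homotheticCenter (x y z : R) :
    orthicForm x y z ![(y + z) * (y * z), (z + x) * (z * x), (x + y) * (x * y)] = 0 :=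
  orthicForm_eq_zero (k := (y + z) * (y * z) * ((z + x) * (z * x)) * ((x + y) * (x * y)))
    (u' := x * (y + z) + 2 * (y * z)) (v' := y * (z + x) + 2 * (z * x))
    (w' := z * (x + y) + 2 * (x * y))
    (by ring) (by ring) (by ring) (by ring)

theorem orthicForm_orthic_centroid (x y z : R) :
    orthicForm x y z ![(y + z) * (x * (y + z) + 2 * (y * z)),
      (z + x) * (y * (z + x) + 2 * (z * x)), (x + y) * (z * (x + y) + 2 * (x * y))] = 0 :=
  orthicForm_eq_zero (u' := y * z) (v' := z * x) (w' := x * y)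
    (k := (y + z) * (x * (y + z) + 2 * (y * z)) *
      ((z + x) * (y * (z + x) + 2 * (z * x))) * ((x + y) * (z * (x + y) + 2 * (x * y))))
    (by ring) (by ring) (by ring) (by ring)

theorem orthicForm_orthic_midpoint (x y z : R) :
    orthicForm x y z ![x * (y + z) + 2 * (y * z), x * (z + x), x * (x + y)] = 0 :=
  orthicForm_eq_zero (k := (z + x) * (x + y) * x ^ 2 * (x * (y + z) + 2 * (y * z)))
    (u' := (y + z) * (y * z)) (v' := z * (y * (z + x) + 2 * (z * x)))
    (w' := y * (z * (x + y) + 2 * (x * y)))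
    (by ring) (by ring) (by ring) (by ring)

end PivotalCubic

section Conway

theorem sum_dist_sq_ne_zero {M : Type*} [MetricSpace M] {P Q R : M} (h : Q ≠ R) :
    dist Q R ^ 2 + dist R P ^ 2 + dist P Q ^ 2 ≠ 0 := by
  have hQR := dist_pos.2 h
  positivity

theorem ne_of_affineIndependent {k V P : Type*} [Ring k] [Nontrivial k] [AddCommGroup V]
    [Module k V] [AddTorsor V P] {A B C : P} (h : AffineIndependent k ![A, B, C]) :
    A ≠ B ∧ B ≠ C ∧ C ≠ A :=
  ⟨h.injective.ne (a₁ := 0) (a₂ := 1) (by decide), h.injective.ne (a₁ := 1) (a₂ := 2) (by decide),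
    h.injective.ne (a₁ := 2) (a₂ := 0) (by decide)⟩

variable {V : Type*} [NormedAddCommGroup V] [InnerProductSpace ℝ V]

/-- Conway's symbol `S_A = (b² + c² - a²) / 2` of the triangle `A B C`, as an inner product. -/
def conway (A B C : V) : ℝ := ⟪B - A, C - A⟫

variable {A B C O : V}

theorem conway_add_conway (A B C : V) : conway A B C + conway B C A = dist A B ^ 2 := by
  simp only [conway, dist_eq_norm, ← real_inner_self_eq_norm_sq, inner_sub_left, inner_sub_right,
    real_inner_comm]
  ring

theorem two_mul_conway (A B C : V) :
    2 * conway A B C = dist C A ^ 2 + dist A B ^ 2 - dist B C ^ 2 := by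
  linear_combination conway_add_conway C A B + conway_add_conway A B C - conway_add_conway B C A

local notation "S_A" => conway A B C
local notation "S_B" => conway B C A
local notation "S_C" => conway C A B

theorem conway_add_conway_ne_zero (h : A ≠ B) : S_A + S_B ≠ 0 := by
  rw [conway_add_conway]
  exact pow_ne_zero 2 (dist_ne_zero.2 h)

theorem sum_conway_mul_conway_ne_zero (h : AffineIndependent ℝ ![A, B, C]) :
    S_A * S_B + S_B * S_C + S_C * S_A ≠ 0 := by
  have hli : LinearIndependent ℝ ![B - A, C - A] := by
    rw [affineIndependent_iff_linearIndependent_vsub ℝ _ 0] at h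
    have hsub : ![B - A, C - A] =
        (fun i : {i // i ≠ 0} ↦ ![A, B, C] i - A) ∘ finSuccAboveEquiv (0 : Fin 3) :=
      funext (Fin.forall_fin_two.2 ⟨rfl, rfl⟩)
    exact hsub ▸ h.comp _ (finSuccAboveEquiv (0 : Fin 3)).injective
  have hdet := Matrix.det_gram_ne_zero_iff_linearIndependent.2 hli
  convert hdet using 1
  simp only [Matrix.det_fin_two, Matrix.gram_apply, Matrix.cons_val, conway, inner_sub_left,
    inner_sub_right, real_inner_comm]
  ring

/-- `H` is the foot of the altitude from `A` in the triangle `A B C`. -/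
structure IsAltitudeFoot (A B C H : V) : Prop where
  mem_line : H ∈ line[ℝ, B, C]
  inner_eq_zero : ⟪A - H, C - B⟫ = 0

variable {H₁ H₂ H₃ : V}

theorem IsAltitudeFoot.smul_eq (h : IsAltitudeFoot A B C H₁) :
    (S_B + S_C) • H₁ = S_C • B + S_B • C := by
  obtain ⟨hH, horth⟩ := h
  obtain ⟨t, rfl⟩ := mem_affineSpan_pair_iff_exists_lineMap_eq.1 hH
  have ht : t * (S_B + S_C) = S_B := by
    rw [AffineMap.lineMap_apply_module] at horth
    simp only [conway, inner_sub_left, inner_sub_right, inner_add_left, inner_smul_left,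
      real_inner_comm, conj_trivial] at horth ⊢
    linear_combination -horth
  rw [AffineMap.lineMap_apply_module]
  linear_combination (norm := module) ht • (C - B)

theorem IsAltitudeFoot.mul_dist_sq (h₂ : IsAltitudeFoot B C A H₂) (h₃ : IsAltitudeFoot C A B H₃)
    (hCA : C ≠ A) (hAB : A ≠ B) :
    (S_C + S_A) * (S_A + S_B) * dist H₂ H₃ ^ 2 = S_A ^ 2 * (S_B + S_C) := by
  have hb : S_C + S_A ≠ 0 := conway_add_conway_ne_zero hCA
  have hc : S_A + S_B ≠ 0 := conway_add_conway_ne_zero hAB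
  have hsub : ((S_C + S_A) * (S_A + S_B)) • (H₂ - H₃) =
      S_A • ((S_A + S_B) • (C - A) - (S_C + S_A) • (B - A)) := by
    linear_combination (norm := module) (S_A + S_B) • h₂.smul_eq - (S_C + S_A) • h₃.smul_eq
  have hinner : ((S_C + S_A) * (S_A + S_B)) ^ 2 * dist H₂ H₃ ^ 2 =
      ((S_C + S_A) * (S_A + S_B)) * (S_A ^ 2 * (S_B + S_C)) :=
    calc ((S_C + S_A) * (S_A + S_B)) ^ 2 * dist H₂ H₃ ^ 2
        = ‖S_A • ((S_A + S_B) • (C - A) - (S_C + S_A) • (B - A))‖ ^ 2 := by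
          rw [← hsub, norm_smul, mul_pow _ ‖_‖, Real.norm_eq_abs, sq_abs, dist_eq_norm]
      _ = ((S_C + S_A) * (S_A + S_B)) * (S_A ^ 2 * (S_B + S_C)) := by
          rw [← real_inner_self_eq_norm_sq]
          simp only [conway, inner_smul_left, inner_smul_right, inner_sub_left, inner_sub_right,
            real_inner_comm, conj_trivial]
          ring
  exact mul_left_cancel₀ (mul_ne_zero hb hc) (by linear_combination hinner)

theorem IsAltitudeFoot.ne (h₂ : IsAltitudeFoot B C A H₂) (h₃ : IsAltitudeFoot C A B H₃)
    (hBC : B ≠ C) (hCA : C ≠ A) (hAB : A ≠ B) (hA : S_A ≠ 0) : H₂ ≠ H₃ := by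
  rintro rfl
  have h := h₂.mul_dist_sq h₃ hCA hAB
  rw [dist_self, zero_pow two_ne_zero, mul_zero] at h
  exact mul_ne_zero (pow_ne_zero 2 hA) (conway_add_conway_ne_zero hBC) h.symm

theorem two_mul_inner_sub_of_dist_eq (h : dist O A = dist O B) :
    2 * ⟪O - A, B - A⟫ = dist A B ^ 2 := by
  have hinner := AffineSubspace.mem_perpBisector_iff_inner_eq.1
    (AffineSubspace.mem_perpBisector_iff_dist_eq.2 h)
  rw [vsub_eq_sub, vsub_eq_sub] at hinner
  linear_combination 2 * hinner

theorem circumcenter_smul_eq (hO : O ∈ affineSpan ℝ (Set.range ![A, B, C]))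
    (hB : dist O A = dist O B) (hC : dist O A = dist O C) :
    (2 * (S_A * S_B + S_B * S_C + S_C * S_A)) • O =
      (S_A * (S_B + S_C)) • A + (S_B * (S_C + S_A)) • B + (S_C * (S_A + S_B)) • C := by
  obtain ⟨w, hw, hwO⟩ := eq_affineCombination_of_mem_affineSpan_of_fintype hO
  rw [Finset.univ.affineCombination_eq_linear_combination _ _ hw] at hwO
  simp only [Fin.sum_univ_three, Matrix.cons_val] at hw hwO
  have hOA : O - A = w 1 • (B - A) + w 2 • (C - A) := by
    linear_combination (norm := module) hwO + hw • A
  have hB' : 2 * (w 1 * (S_A + S_B) + w 2 * S_A) = S_A + S_B := by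
    have h := two_mul_inner_sub_of_dist_eq hB
    rw [hOA, ← conway_add_conway A B C] at h
    simp only [conway, inner_smul_left, inner_add_left, inner_sub_left, inner_sub_right,
      real_inner_comm, conj_trivial] at h ⊢
    linear_combination h
  have hC' : 2 * (w 1 * S_A + w 2 * (S_C + S_A)) = S_C + S_A := by
    have h := two_mul_inner_sub_of_dist_eq hC
    rw [hOA, dist_comm, ← conway_add_conway C A B] at h
    simp only [conway, inner_smul_left, inner_add_left, inner_sub_left, inner_sub_right,
      real_inner_comm, conj_trivial] at h ⊢
    linear_combination h
  have h₁ : 2 * (S_A * S_B + S_B * S_C + S_C * S_A) * w 1 = S_B * (S_C + S_A) := by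
    linear_combination (S_C + S_A) * hB' - S_A * hC'
  have h₂ : 2 * (S_A * S_B + S_B * S_C + S_C * S_A) * w 2 = S_C * (S_A + S_B) := by
    linear_combination (S_A + S_B) * hC' - S_A * hB'
  linear_combination (norm := module)
    (2 * (S_A * S_B + S_B * S_C + S_C * S_A)) • hOA + h₁ • (B - A) + h₂ • (C - A)

end Conway

section OrthicCubic

variable {V : Type*} [NormedAddCommGroup V] [InnerProductSpace ℝ V]

/-- The orthic cubic of the triangle `A B C`, as a set of points: the pivotal isocubic with pivot
the orthocenter and pole `orthicPole`. -/
def orthicCubic (A B C : V) : Set V :=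
  {p | ∃ u v w, IsBarycenter ![A, B, C] ![u, v, w] p ∧
    orthicForm (conway A B C) (conway B C A) (conway C A B) ![u, v, w] = 0}

variable {A B C O H₁ H₂ H₃ p : V}

local notation "S_A" => conway A B C
local notation "S_B" => conway B C A
local notation "S_C" => conway C A B

theorem mem_orthicCubic_of_smul_eq {u v w : ℝ} (hform : orthicForm S_A S_B S_C ![u, v, w] = 0)
    (hsum : u + v + w ≠ 0) (hp : (u + v + w) • p = u • A + v • B + w • C) :
    p ∈ orthicCubic A B C :=
  ⟨u, v, w, isBarycenter_fin_three_iff.2 ⟨hsum, hp⟩, hform⟩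

theorem mem_orthicCubic_of_rotate (hp : p ∈ orthicCubic B C A) : p ∈ orthicCubic A B C := by
  obtain ⟨v, w, u, hbary, hform⟩ := hp
  exact ⟨u, v, w, hbary.rotate, by rwa [← orthicForm_rotate]⟩

theorem vertex_mem_orthicCubic (A B C : V) : A ∈ orthicCubic A B C :=
  mem_orthicCubic_of_smul_eq (pivotalForm_vertex _ _) (by norm_num) (by module)

theorem IsAltitudeFoot.mem_orthicCubic (h : IsAltitudeFoot A B C H₁) (hBC : B ≠ C) :
    H₁ ∈ orthicCubic A B C := by
  have ha : S_B + S_C ≠ 0 := conway_add_conway_ne_zero hBC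
  refine mem_orthicCubic_of_smul_eq (u := 0) (v := S_C) (w := S_B)
    (pivotalForm_cevian_trace _ (by ring)) ?_ ?_
  · rwa [zero_add, add_comm]
  · linear_combination (norm := module) h.smul_eq

theorem IsAltitudeFoot.midpoint_mem_orthicCubic (h₂ : IsAltitudeFoot B C A H₂)
    (h₃ : IsAltitudeFoot C A B H₃) (hCA : C ≠ A) (hAB : A ≠ B) :
    midpoint ℝ H₂ H₃ ∈ orthicCubic A B C := by
  have hb : S_C + S_A ≠ 0 := conway_add_conway_ne_zero hCA
  have hc : S_A + S_B ≠ 0 := conway_add_conway_ne_zero hAB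
  refine mem_orthicCubic_of_smul_eq (orthicForm_orthic_midpoint _ _ _) ?_ ?_
  · convert mul_ne_zero two_ne_zero (mul_ne_zero hb hc) using 1
    ring
  · rw [midpoint_eq_smul_add, invOf_eq_inv]
    linear_combination (norm := module) (S_A + S_B) • h₂.smul_eq + (S_C + S_A) • h₃.smul_eq

theorem IsAltitudeFoot.centroid_mem_orthicCubic (h₁ : IsAltitudeFoot A B C H₁)
    (h₂ : IsAltitudeFoot B C A H₂) (h₃ : IsAltitudeFoot C A B H₃) (hBC : B ≠ C) (hCA : C ≠ A)
    (hAB : A ≠ B) (hp : IsBarycenter ![H₁, H₂, H₃] ![1, 1, 1] p) : p ∈ orthicCubic A B C := by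
  have ha : S_B + S_C ≠ 0 := conway_add_conway_ne_zero hBC
  have hb : S_C + S_A ≠ 0 := conway_add_conway_ne_zero hCA
  have hc : S_A + S_B ≠ 0 := conway_add_conway_ne_zero hAB
  refine mem_orthicCubic_of_smul_eq (orthicForm_orthic_centroid _ _ _) ?_ ?_
  · convert mul_ne_zero three_ne_zero (mul_ne_zero ha (mul_ne_zero hb hc)) using 1
    ring
  · linear_combination (norm := module)
      ((S_B + S_C) * (S_C + S_A) * (S_A + S_B)) • (isBarycenter_fin_three_iff.1 hp).2 +
      ((S_C + S_A) * (S_A + S_B)) • h₁.smul_eq + ((S_A + S_B) * (S_B + S_C)) • h₂.smul_eq +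
      ((S_B + S_C) * (S_C + S_A)) • h₃.smul_eq

theorem symmedian_mem_orthicCubic
    (hp : IsBarycenter ![A, B, C] ![dist B C ^ 2, dist C A ^ 2, dist A B ^ 2] p) :
    p ∈ orthicCubic A B C := by
  refine ⟨_, _, _, hp, ?_⟩
  rw [← conway_add_conway B C A, ← conway_add_conway C A B, ← conway_add_conway A B C]
  exact orthicForm_symmedian _ _ _

theorem IsAltitudeFoot.symmedian_mem_orthicCubic (h₁ : IsAltitudeFoot A B C H₁)
    (h₂ : IsAltitudeFoot B C A H₂) (h₃ : IsAltitudeFoot C A B H₃) (hBC : B ≠ C) (hCA : C ≠ A)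
    (hAB : A ≠ B)
    (hp : IsBarycenter ![H₁, H₂, H₃] ![dist H₂ H₃ ^ 2, dist H₃ H₁ ^ 2, dist H₁ H₂ ^ 2] p) :
    p ∈ orthicCubic A B C := by
  have ha : S_B + S_C ≠ 0 := conway_add_conway_ne_zero hBC
  have hb : S_C + S_A ≠ 0 := conway_add_conway_ne_zero hCA
  have hc : S_A + S_B ≠ 0 := conway_add_conway_ne_zero hAB
  have hd₁ := h₂.mul_dist_sq h₃ hCA hAB
  have hd₂ := h₃.mul_dist_sq h₁ hAB hBC
  have hd₃ := h₁.mul_dist_sq h₂ hBC hCA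
  obtain ⟨hsum, hp⟩ := isBarycenter_fin_three_iff.1 hp
  refine mem_orthicCubic_of_smul_eq (orthicForm_orthic_symmedian _ _ _) ?_ ?_
  · convert mul_ne_zero (mul_ne_zero (mul_ne_zero ha hb) hc) hsum using 1
    linear_combination -(S_B + S_C) * hd₁ - (S_C + S_A) * hd₂ - (S_A + S_B) * hd₃
  · linear_combination (norm := module)
      ((S_B + S_C) * (S_C + S_A) * (S_A + S_B)) • hp +
      ((S_B + S_C) • hd₁) • (H₁ - p) + ((S_C + S_A) • hd₂) • (H₂ - p) +
      ((S_A + S_B) • hd₃) • (H₃ - p) + (S_A ^ 2 * (S_B + S_C)) • h₁.smul_eq +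
      (S_B ^ 2 * (S_C + S_A)) • h₂.smul_eq + (S_C ^ 2 * (S_A + S_B)) • h₃.smul_eq

theorem homotheticCenter_mem_orthicCubic (hA : S_A ≠ 0) (hB : S_B ≠ 0) (hC : S_C ≠ 0)
    (hp : IsBarycenter ![A, B, C]
      ![dist B C ^ 2 / (2 * S_A), dist C A ^ 2 / (2 * S_B), dist A B ^ 2 / (2 * S_C)] p) :
    p ∈ orthicCubic A B C := by
  rw [← conway_add_conway B C A, ← conway_add_conway C A B, ← conway_add_conway A B C] at hp
  refine ⟨_, _, _, ?_, orthicForm_homotheticCenter _ _ _⟩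
  convert hp.smul (r := 2 * (S_A * S_B * S_C)) (by simp [*]) using 1
  ext i
  fin_cases i <;> simp <;> field_simp

theorem orthocenter_mem_orthicCubic (hABC : AffineIndependent ℝ ![A, B, C])
    (hO : O ∈ affineSpan ℝ (Set.range ![A, B, C])) (hB : dist O A = dist O B)
    (hC : dist O A = dist O C) : A + B + C - (2 : ℝ) • O ∈ orthicCubic A B C := by
  refine mem_orthicCubic_of_smul_eq (pivotalForm_pivot _ _) ?_ ?_
  · convert sum_conway_mul_conway_ne_zero hABC using 1
    ring
  · linear_combination (norm := module) -circumcenter_smul_eq hO hB hC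

theorem ninePointCenter_mem_orthicCubic (hABC : AffineIndependent ℝ ![A, B, C])
    (hO : O ∈ affineSpan ℝ (Set.range ![A, B, C])) (hB : dist O A = dist O B)
    (hC : dist O A = dist O C) :
    midpoint ℝ O (A + B + C - (2 : ℝ) • O) ∈ orthicCubic A B C := by
  refine mem_orthicCubic_of_smul_eq (orthicForm_ninePointCenter _ _ _) ?_ ?_
  · convert mul_ne_zero four_ne_zero (sum_conway_mul_conway_ne_zero hABC) using 1
    ring
  · rw [midpoint_eq_smul_add, invOf_eq_inv]
    linear_combination (norm := module) -circumcenter_smul_eq hO hB hC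

theorem exists_cubic_vanishing_on_orthicCubic {ι : Type*} [Fintype ι]
    {A B C : EuclideanSpace ℝ ι} (hABC : AffineIndependent ℝ ![A, B, C])
    (hspan : affineSpan ℝ (Set.range ![A, B, C]) = ⊤)
    (hA : conway A B C ≠ 0) (hB : conway B C A ≠ 0) (hC : conway C A B ≠ 0) :
    ∃ f : MvPolynomial ι ℝ, f ≠ 0 ∧ f.totalDegree ≤ 3 ∧
      ∀ p ∈ orthicCubic A B C, MvPolynomial.eval (fun i ↦ p i) f = 0 := by
  obtain ⟨hAB, hBC, hCA⟩ := ne_of_affineIndependent hABC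
  have hpole : orthicPole (conway A B C) (conway B C A) (conway C A B) ≠ 0 :=
    orthicPole_ne_zero hA hB hC (conway_add_conway_ne_zero hBC) (conway_add_conway_ne_zero hCA)
      (conway_add_conway_ne_zero hAB) (sum_conway_mul_conway_ne_zero hABC)
  obtain ⟨f, hf, hdeg, hzero⟩ := exists_eval_eq_zero_of_isBarycenter
    ⟨![A, B, C], hABC, hspan⟩ (pivotalCubic_isHomogeneous _ _)
    (pivotalCubic_ne_zero (π := ![conway B C A * conway C A B, conway C A B * conway A B C,
      conway A B C * conway B C A]) hpole (by simp [Fin.forall_fin_succ, *]))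
  refine ⟨f, hf, hdeg, ?_⟩
  rintro p ⟨u, v, w, hbary, hform⟩
  exact hzero _ p hbary (by rwa [eval_pivotalCubic])

end OrthicCubic

theorem stmt1_general (A B C O : EuclideanSpace ℝ (Fin 2))
    (hABC : AffineIndependent ℝ ![A, B, C])
    (a b c : ℝ) (ha : a = dist B C) (hb : b = dist C A) (hc : c = dist A B)
    (hright : b ^ 2 + c ^ 2 - a ^ 2 ≠ 0 ∧ c ^ 2 + a ^ 2 - b ^ 2 ≠ 0 ∧ a ^ 2 + b ^ 2 - c ^ 2 ≠ 0)
    (hsum : a ^ 2 / (b ^ 2 + c ^ 2 - a ^ 2) + b ^ 2 / (c ^ 2 + a ^ 2 - b ^ 2) +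
      c ^ 2 / (a ^ 2 + b ^ 2 - c ^ 2) ≠ 0)
    (H₁ H₂ H₃ H E Sy Gh Syh GOT : EuclideanSpace ℝ (Fin 2))
    (hH₁ : IsAltitudeFoot A B C H₁) (hH₂ : IsAltitudeFoot B C A H₂) (hH₃ : IsAltitudeFoot C A B H₃)
    (hO : dist O A = dist O B ∧ dist O A = dist O C)
    (hH : H = A + B + C - (2 : ℝ) • O)
    (hE : E = midpoint ℝ O H)
    (hSy : Sy = bary A B C (a ^ 2) (b ^ 2) (c ^ 2))
    (hGh : Gh = bary H₁ H₂ H₃ 1 1 1)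
    (hSyh : Syh = bary H₁ H₂ H₃ (dist H₂ H₃ ^ 2) (dist H₃ H₁ ^ 2) (dist H₁ H₂ ^ 2))
    (hGOT : GOT = bary A B C (a ^ 2 / (b ^ 2 + c ^ 2 - a ^ 2))
      (b ^ 2 / (c ^ 2 + a ^ 2 - b ^ 2)) (c ^ 2 / (a ^ 2 + b ^ 2 - c ^ 2))) :
    ∃ f : MvPolynomial (Fin 2) ℝ, f ≠ 0 ∧ f.totalDegree ≤ 3 ∧
      mvEval f A = 0 ∧ mvEval f B = 0 ∧ mvEval f C = 0 ∧
      mvEval f H₁ = 0 ∧ mvEval f H₂ = 0 ∧ mvEval f H₃ = 0 ∧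
      mvEval f (midpoint ℝ H₂ H₃) = 0 ∧ mvEval f (midpoint ℝ H₃ H₁) = 0 ∧
      mvEval f (midpoint ℝ H₁ H₂) = 0 ∧
      mvEval f H = 0 ∧ mvEval f E = 0 ∧ mvEval f Gh = 0 ∧
      mvEval f Sy = 0 ∧ mvEval f Syh = 0 ∧ mvEval f GOT = 0 := by
  subst ha hb hc hH hE hSy hGh hSyh hGOT
  simp only [← two_mul_conway A B C, ← two_mul_conway B C A, ← two_mul_conway C A B]
    at hright hsum ⊢
  simp only [ne_eq, mul_eq_zero, two_ne_zero, false_or] at hright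
  obtain ⟨hA, hB, hC⟩ := hright
  obtain ⟨hAB, hBC, hCA⟩ := ne_of_affineIndependent hABC
  have hspan : affineSpan ℝ (Set.range ![A, B, C]) = ⊤ :=
    hABC.affineSpan_eq_top_iff_card_eq_finrank_add_one.2 (by simp)
  have hOspan : O ∈ affineSpan ℝ (Set.range ![A, B, C]) := hspan ▸ AffineSubspace.mem_top ℝ _ O
  have hH₂₃ : H₂ ≠ H₃ := hH₂.ne hH₃ hBC hCA hAB hA
  obtain ⟨f, hf, hdeg, hzero⟩ := exists_cubic_vanishing_on_orthicCubic hABC hspan hA hB hC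
  have hzero_BCA {p} (hp : p ∈ orthicCubic B C A) := hzero p (mem_orthicCubic_of_rotate hp)
  have hzero_CAB {p} (hp : p ∈ orthicCubic C A B) := hzero_BCA (mem_orthicCubic_of_rotate hp)
  exact ⟨f, hf, hdeg,
    hzero _ (vertex_mem_orthicCubic A B C), hzero_BCA (vertex_mem_orthicCubic B C A),
    hzero_CAB (vertex_mem_orthicCubic C A B),
    hzero _ (hH₁.mem_orthicCubic hBC), hzero_BCA (hH₂.mem_orthicCubic hCA),
    hzero_CAB (hH₃.mem_orthicCubic hAB),
    hzero _ (hH₂.midpoint_mem_orthicCubic hH₃ hCA hAB),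
    hzero_BCA (hH₃.midpoint_mem_orthicCubic hH₁ hAB hBC),
    hzero_CAB (hH₁.midpoint_mem_orthicCubic hH₂ hBC hCA),
    hzero _ (orthocenter_mem_orthicCubic hABC hOspan hO.1 hO.2),
    hzero _ (ninePointCenter_mem_orthicCubic hABC hOspan hO.1 hO.2),
    hzero _ (hH₁.centroid_mem_orthicCubic hH₂ hH₃ hBC hCA hAB (isBarycenter_bary (by norm_num))),
    hzero _ (symmedian_mem_orthicCubic (isBarycenter_bary (sum_dist_sq_ne_zero hBC))),
    hzero _ (hH₁.symmedian_mem_orthicCubic hH₂ hH₃ hBC hCA hAB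
      (isBarycenter_bary (sum_dist_sq_ne_zero hH₂₃))),
    hzero _ (homotheticCenter_mem_orthicCubic hA hB hC (isBarycenter_bary hsum))⟩

theorem stmt1 (A B C O : EuclideanSpace ℝ (Fin 2))
    (hABC : AffineIndependent ℝ ![A, B, C])
    (a b c : ℝ) (ha : a = dist B C) (hb : b = dist C A) (hc : c = dist A B)
    (hacute : 0 < b ^ 2 + c ^ 2 - a ^ 2 ∧ 0 < c ^ 2 + a ^ 2 - b ^ 2 ∧
      0 < a ^ 2 + b ^ 2 - c ^ 2)
    (H₁ H₂ H₃ H E Sy Gh Syh GOT : EuclideanSpace ℝ (Fin 2))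
    (hH₁ : H₁ ∈ affineSpan ℝ ({B, C} : Set (EuclideanSpace ℝ (Fin 2))) ∧
      ⟪A - H₁, C - B⟫ = 0)
    (hH₂ : H₂ ∈ affineSpan ℝ ({C, A} : Set (EuclideanSpace ℝ (Fin 2))) ∧
      ⟪B - H₂, A - C⟫ = 0)
    (hH₃ : H₃ ∈ affineSpan ℝ ({A, B} : Set (EuclideanSpace ℝ (Fin 2))) ∧
      ⟪C - H₃, B - A⟫ = 0)
    (hO : dist O A = dist O B ∧ dist O A = dist O C)
    (hH : H = A + B + C - (2 : ℝ) • O)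
    (hE : E = midpoint ℝ O H)
    (hSy : Sy = bary A B C (a ^ 2) (b ^ 2) (c ^ 2))
    (hGh : Gh = bary H₁ H₂ H₃ 1 1 1)
    (hSyh : Syh = bary H₁ H₂ H₃ (dist H₂ H₃ ^ 2) (dist H₃ H₁ ^ 2) (dist H₁ H₂ ^ 2))
    (hGOT : GOT = bary A B C (a ^ 2 / (b ^ 2 + c ^ 2 - a ^ 2))
      (b ^ 2 / (c ^ 2 + a ^ 2 - b ^ 2)) (c ^ 2 / (a ^ 2 + b ^ 2 - c ^ 2))) :
    ∃ f : MvPolynomial (Fin 2) ℝ, f ≠ 0 ∧ f.totalDegree ≤ 3 ∧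
      mvEval f A = 0 ∧ mvEval f B = 0 ∧ mvEval f C = 0 ∧
      mvEval f H₁ = 0 ∧ mvEval f H₂ = 0 ∧ mvEval f H₃ = 0 ∧
      mvEval f (midpoint ℝ H₂ H₃) = 0 ∧ mvEval f (midpoint ℝ H₃ H₁) = 0 ∧
      mvEval f (midpoint ℝ H₁ H₂) = 0 ∧
      mvEval f H = 0 ∧ mvEval f E = 0 ∧ mvEval f Gh = 0 ∧
      mvEval f Sy = 0 ∧ mvEval f Syh = 0 ∧ mvEval f GOT = 0 := by
  obtain ⟨hA, hB, hC⟩ := hacute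
  have hc₀ : 0 < c ^ 2 := by linarith
  exact stmt1_general A B C O hABC a b c ha hb hc ⟨hA.ne', hB.ne', hC.ne'⟩ (by positivity)
    H₁ H₂ H₃ H E Sy Gh Syh GOT ⟨hH₁.1, hH₁.2⟩ ⟨hH₂.1, hH₂.2⟩ ⟨hH₃.1, hH₃.2⟩ hO hH hE hSy hGh hSyh
    hGOT
end

section
/- Let A, B, C be a nondegenerate triangle in the Euclidean plane with circumcenter O, orthocenter H, centroid G, and de Longchamps point L = 2•O − H, and assume H ≠ O. Let d be the line through O perpendicular to the Euler line, i.e. the set of points p of the plane with ⟪p − O, H − O⟫ = 0. Then dist(G, H) = 2 · infDist(G, d) and dist(L, H) = 2 · infDist(L, d). (That is, the centroid G and the de Longchamps point L are the two vertices of a conic with focus H, eccentricity 2, and directrix the line through the circumcenter perpendicular to the Euler line.) -/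
open EuclideanGeometry RealInnerProductSpace

/- By Euler's relation `G` divides the segment from `O` to `H` in the ratio `1 : 2`, and `L` is the
reflection of `H` in `O`; on the line `OH`, with coordinate `0` at `O` and `1` at `H`, they are thus
the points `1 / 3` and `-1`. The point with coordinate `t` is at distance `|1 - t| * OH` from `H`
and `|t| * OH` from the perpendicular at `O`, and `|1 - t| = 2 * |t|` has just these two
solutions. -/

section FocusDirectrix

variable {V P : Type*} [SeminormedAddCommGroup V] [InnerProductSpace ℝ V] [PseudoMetricSpace P]
  [NormedAddTorsor V P]

theorem infDist_eq_dist_of_inner_nonpos {s : Set P} {x p : P} (hp : p ∈ s)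
    (h : ∀ y ∈ s, ⟪x -ᵥ p, y -ᵥ p⟫ ≤ 0) : Metric.infDist x s = dist x p := by
  refine le_antisymm (Metric.infDist_le_dist_of_mem hp) ((Metric.le_infDist ⟨p, hp⟩).2 ?_)
  intro y hy
  have law_of_cosines : ‖x -ᵥ y‖ ^ 2 = ‖x -ᵥ p‖ ^ 2 - 2 * ⟪x -ᵥ p, y -ᵥ p⟫ + ‖y -ᵥ p‖ ^ 2 := by
    rw [← vsub_sub_vsub_cancel_right x y p, norm_sub_sq_real]
  rw [dist_eq_norm_vsub V, dist_eq_norm_vsub V]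
  refine le_of_sq_le_sq ?_ (norm_nonneg _)
  linarith [h y hy, sq_nonneg ‖y -ᵥ p‖]

theorem infDist_lineMap_setOf_inner_vsub_eq_zero (p q : P) (t : ℝ) :
    Metric.infDist (AffineMap.lineMap p q t) {y : P | ⟪y -ᵥ p, q -ᵥ p⟫ = 0} = |t| * dist p q := by
  have foot_mem : p ∈ {y : P | ⟪y -ᵥ p, q -ᵥ p⟫ = 0} := by simp
  rw [infDist_eq_dist_of_inner_nonpos foot_mem, dist_lineMap_left, Real.norm_eq_abs]
  intro y hy
  rw [AffineMap.lineMap_vsub_left, real_inner_smul_left, real_inner_comm, hy, mul_zero]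

theorem dist_lineMap_right_eq_mul_infDist (p q : P) {t e : ℝ} (h : |1 - t| = e * |t|) :
    dist (AffineMap.lineMap p q t) q =
      e * Metric.infDist (AffineMap.lineMap p q t) {y : P | ⟪y -ᵥ p, q -ᵥ p⟫ = 0} := by
  rw [infDist_lineMap_setOf_inner_vsub_eq_zero, dist_lineMap_right, Real.norm_eq_abs, h, mul_assoc]

end FocusDirectrix

theorem lineMap_one_third_add_add_sub_two_smul {k V : Type*} [Field k] [AddCommGroup V] [Module k V]
    (h3 : (3 : k) ≠ 0) (A B C O : V) :
    AffineMap.lineMap O (A + B + C - (2 : k) • O) (1 / 3 : k) =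
      (1 / 3 : k) • A + (1 / 3 : k) • B + (1 / 3 : k) • C := by
  rw [AffineMap.lineMap_apply_module]
  match_scalars <;> field

theorem lineMap_neg_one {k V : Type*} [Ring k] [AddCommGroup V] [Module k V] (x y : V) :
    AffineMap.lineMap x y (-1 : k) = (2 : k) • x - y := by
  rw [AffineMap.lineMap_apply_module', neg_one_smul, two_smul]
  abel

theorem stmt2_general {V : Type*} [SeminormedAddCommGroup V] [InnerProductSpace ℝ V]
    (A B C O H G L : V)
    (hH : H = A + B + C - (2 : ℝ) • O)
    (hG : G = (1 / 3 : ℝ) • A + (1 / 3 : ℝ) • B + (1 / 3 : ℝ) • C)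
    (hL : L = (2 : ℝ) • O - H)
    (d : Set V) (hd : d = {p : V | ⟪p - O, H - O⟫ = 0}) :
    dist G H = 2 * Metric.infDist G d ∧ dist L H = 2 * Metric.infDist L d := by
  have centroid_eq : G = AffineMap.lineMap O H (1 / 3 : ℝ) := by
    rw [hG, hH, lineMap_one_third_add_add_sub_two_smul three_ne_zero]
  have deLongchamps_eq : L = AffineMap.lineMap O H (-1 : ℝ) := by rw [hL, lineMap_neg_one]
  rw [centroid_eq, deLongchamps_eq, hd]
  exact ⟨dist_lineMap_right_eq_mul_infDist O H (by norm_num [abs_of_pos]),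
    dist_lineMap_right_eq_mul_infDist O H (by norm_num)⟩

theorem stmt2 (A B C O : EuclideanSpace ℝ (Fin 2))
    (hABC : AffineIndependent ℝ ![A, B, C])
    (hO : dist O A = dist O B ∧ dist O A = dist O C)
    (H G L : EuclideanSpace ℝ (Fin 2))
    (hH : H = A + B + C - (2 : ℝ) • O)
    (hG : G = (1 / 3 : ℝ) • A + (1 / 3 : ℝ) • B + (1 / 3 : ℝ) • C)
    (hL : L = (2 : ℝ) • O - H)
    (hHO : H ≠ O)
    (d : Set (EuclideanSpace ℝ (Fin 2)))
    (hd : d = {p : EuclideanSpace ℝ (Fin 2) | ⟪p - O, H - O⟫ = 0}) :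
    dist G H = 2 * Metric.infDist G d ∧ dist L H = 2 * Metric.infDist L d := by
  exact stmt2_general A B C O H G L hH hG hL d hd
end

section
/- Let A, B, C be a nondegenerate triangle in the Euclidean plane with side lengths a = dist B C, b = dist C A, c = dist A B, incenter I (barycentric weights (a, b, c)), circumcenter O, orthocenter H, and nine-point center E = midpoint(O, H). Let E₁ = midpoint(A, H), E₂ = midpoint(B, H), E₃ = midpoint(C, H) be the vertices of the Euler triangle, and M₁ = midpoint(B,C), M₂ = midpoint(C,A), M₃ = midpoint(A,B) the midpoints of the sides. Then there exists a nonzero real polynomial in two variables of total degree at most 3 vanishing at all ten points: E₁, E₂, E₃, M₁, M₂, M₃, midpoint(I, H), E, H, O. -/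
open EuclideanGeometry RealInnerProductSpace

/-! The ten points lie on the Darboux cubic of the Euler triangle. The Darboux cubic of `ABC` is the
locus of the points whose feet of perpendiculars on the sides satisfy Ceva's condition, so it
contains the vertices, the incenter and the orthocenter `H`. The point reflection in the
circumcenter `O` exchanges the two sides of Ceva's condition, so the cubic also contains `O` and
the reflections in `O` of the points above. The homothety with center `H` and ratio `1 / 2` takes
`ABC` to its Euler triangle, the antipodes of the vertices to the midpoints of the sides, and the
reflection of `H` in `O` to `O` itself.
-/

section AffineSpace

variable {k V Pt : Type*} [Field k] [AddCommGroup V] [Module k V]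

lemma smul_sub_add_smul_sub_add_smul_sub_eq_zero {A B C I : V} {u v w : k}
    (h : u + v + w ≠ 0)
    (hI : I = (u / (u + v + w)) • A + (v / (u + v + w)) • B + (w / (u + v + w)) • C) :
    u • (A - I) + v • (B - I) + w • (C - I) = 0 := by
  have hsum : (u + v + w) • I = u • A + v • B + w • C := by
    simp only [hI, smul_add, smul_smul, mul_div_cancel₀ _ h]
  calc u • (A - I) + v • (B - I) + w • (C - I)
      = u • A + v • B + w • C - (u + v + w) • I := by module
    _ = 0 := by rw [hsum, sub_self]

variable [AddTorsor V Pt]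

lemma midpoint_pointReflection_eq_midpoint [Invertible (2 : k)] {A B C O H : Pt}
    (hH : H -ᵥ O = (A -ᵥ O) + (B -ᵥ O) + (C -ᵥ O)) :
    midpoint k (Equiv.pointReflection O A) H = midpoint k B C := by
  rw [midpoint_eq_midpoint_iff_vsub_eq_vsub, Equiv.pointReflection_apply, vadd_vsub_assoc,
    ← vsub_sub_vsub_cancel_right C H O, hH, ← neg_vsub_eq_vsub_rev A O,
    ← neg_vsub_eq_vsub_rev B O]
  abel

lemma vsub_notMem_span_of_affineIndependent {A B C : Pt}
    (h : AffineIndependent k ![A, B, C]) : A -ᵥ B ∉ Submodule.span k {C -ᵥ B} := by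
  rw [affineIndependent_iff_not_collinear_set] at h
  intro hmem
  obtain ⟨r, hr⟩ := Submodule.mem_span_singleton.mp hmem
  apply h
  apply collinear_insert_of_mem_affineSpan_pair
  rw [← vsub_vadd A B, ← hr]
  exact smul_vsub_vadd_mem_affineSpan_pair r B C

end AffineSpace

lemma perimeter_pos_of_ne {X : Type*} [MetricSpace X] {A B C : X} (h : B ≠ C) :
    0 < dist B C + dist C A + dist A B := by
  have := dist_pos.mpr h
  positivity

section DarbouxForm

variable {V Pt : Type*} [NormedAddCommGroup V] [InnerProductSpace ℝ V] [MetricSpace Pt]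
  [NormedAddTorsor V Pt] {A B C O P : Pt}

/-- The equation of the Darboux cubic of the triangle `ABC`, as a function of the point `P`: Ceva's
condition for the feet of the perpendiculars from `P` to the sides. Each factor is the signed
distance from a vertex to a foot, multiplied by the length of the side, so that no division
occurs. -/
def darbouxForm (A B C P : Pt) : ℝ :=
  ⟪P -ᵥ B, C -ᵥ B⟫ * ⟪P -ᵥ C, A -ᵥ C⟫ * ⟪P -ᵥ A, B -ᵥ A⟫ -
    ⟪P -ᵥ C, B -ᵥ C⟫ * ⟪P -ᵥ A, C -ᵥ A⟫ * ⟪P -ᵥ B, A -ᵥ B⟫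

lemma darbouxForm_rotate (A B C P : Pt) : darbouxForm B C A P = darbouxForm A B C P := by
  unfold darbouxForm
  ring

lemma darbouxForm_self_left (A B C : Pt) : darbouxForm A B C A = 0 := by
  simp [darbouxForm]

lemma darbouxForm_self_middle (A B C : Pt) : darbouxForm A B C B = 0 := by
  rw [← darbouxForm_rotate, darbouxForm_self_left]

lemma darbouxForm_self_right (A B C : Pt) : darbouxForm A B C C = 0 := by
  rw [← darbouxForm_rotate, darbouxForm_self_middle]

lemma darbouxForm_homothety (A B C P H : Pt) (k : ℝ) :
    darbouxForm (AffineMap.homothety H k A) (AffineMap.homothety H k B)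
      (AffineMap.homothety H k C) (AffineMap.homothety H k P) = k ^ 6 * darbouxForm A B C P := by
  simp only [darbouxForm, ← AffineMap.linearMap_vsub, AffineMap.homothety_linear,
    LinearMap.smul_apply, LinearMap.id_apply, real_inner_smul_left, real_inner_smul_right]
  ring

lemma inner_pointReflection_vsub_of_dist_eq (h : dist O B = dist O C) (P : Pt) :
    ⟪Equiv.pointReflection O P -ᵥ B, C -ᵥ B⟫ = ⟪P -ᵥ C, B -ᵥ C⟫ := by
  have hperp : ⟪(O -ᵥ B) + (O -ᵥ C), (O -ᵥ B) - (O -ᵥ C)⟫ = 0 := by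
    rw [real_inner_add_sub_eq_zero_iff, ← dist_eq_norm_vsub, ← dist_eq_norm_vsub, h]
  have hP : Equiv.pointReflection O P -ᵥ B = (O -ᵥ B) + (O -ᵥ C) - (P -ᵥ C) := by
    rw [Equiv.pointReflection_apply, vadd_vsub_assoc, ← vsub_sub_vsub_cancel_right O P C]
    abel
  rw [hP, ← vsub_sub_vsub_cancel_left C B O, inner_sub_left, hperp, zero_sub, ← inner_neg_right,
    vsub_sub_vsub_cancel_left, neg_vsub_eq_vsub_rev]

lemma darbouxForm_pointReflection (hAB : dist O A = dist O B) (hAC : dist O A = dist O C) (P : Pt) :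
    darbouxForm A B C (Equiv.pointReflection O P) = -darbouxForm A B C P := by
  have hBC : dist O B = dist O C := hAB.symm.trans hAC
  simp only [darbouxForm, inner_pointReflection_vsub_of_dist_eq hAB,
    inner_pointReflection_vsub_of_dist_eq hAB.symm, inner_pointReflection_vsub_of_dist_eq hAC,
    inner_pointReflection_vsub_of_dist_eq hAC.symm, inner_pointReflection_vsub_of_dist_eq hBC,
    inner_pointReflection_vsub_of_dist_eq hBC.symm]
  ring

lemma darbouxForm_circumcenter (hAB : dist O A = dist O B) (hAC : dist O A = dist O C) :
    darbouxForm A B C O = 0 := by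
  have h := darbouxForm_pointReflection hAB hAC O
  rwa [Equiv.pointReflection_self, self_eq_neg] at h

lemma darbouxForm_eq_zero_of_altitudes (hA : ⟪P -ᵥ A, B -ᵥ C⟫ = 0) (hB : ⟪P -ᵥ B, C -ᵥ A⟫ = 0)
    (hC : ⟪P -ᵥ C, A -ᵥ B⟫ = 0) : darbouxForm A B C P = 0 := by
  rw [← vsub_sub_vsub_cancel_right B C A, inner_sub_right, sub_eq_zero] at hA
  rw [← vsub_sub_vsub_cancel_right C A B, inner_sub_right, sub_eq_zero] at hB
  rw [← vsub_sub_vsub_cancel_right A B C, inner_sub_right, sub_eq_zero] at hC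
  rw [darbouxForm, hA, hB, hC]
  ring

lemma inner_orthocenter_vsub_eq_zero {H : Pt}
    (hH : H -ᵥ O = (A -ᵥ O) + (B -ᵥ O) + (C -ᵥ O)) (h : dist O B = dist O C) :
    ⟪H -ᵥ A, B -ᵥ C⟫ = 0 := by
  have hHA : H -ᵥ A = (B -ᵥ O) + (C -ᵥ O) := by
    rw [← vsub_sub_vsub_cancel_right H A O, hH]
    abel
  rw [hHA, ← vsub_sub_vsub_cancel_right B C O, real_inner_add_sub_eq_zero_iff,
    ← dist_eq_norm_vsub, ← dist_eq_norm_vsub, dist_comm B, dist_comm C, h]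

lemma darbouxForm_orthocenter {H : Pt} (hH : H -ᵥ O = (A -ᵥ O) + (B -ᵥ O) + (C -ᵥ O))
    (hAB : dist O A = dist O B) (hAC : dist O A = dist O C) : darbouxForm A B C H = 0 := by
  refine darbouxForm_eq_zero_of_altitudes
    (inner_orthocenter_vsub_eq_zero hH (hAB.symm.trans hAC))
    (inner_orthocenter_vsub_eq_zero ?_ hAC.symm)
    (inner_orthocenter_vsub_eq_zero ?_ hAB)
  · rw [hH]
    abel
  · rw [hH]
    abel

lemma inner_vsub_vsub_eq_dist_sq (A B C : Pt) :
    ⟪A -ᵥ B, C -ᵥ B⟫ = (dist A B ^ 2 + dist B C ^ 2 - dist C A ^ 2) / 2 := by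
  rw [real_inner_eq_norm_mul_self_add_norm_mul_self_sub_norm_sub_mul_self_div_two,
    vsub_sub_vsub_cancel_right, ← dist_eq_norm_vsub, ← dist_eq_norm_vsub, ← dist_eq_norm_vsub,
    dist_comm C B, dist_comm A C]
  ring

-- The foot of the perpendicular from the incenter to `BC` is the point of contact of the incircle,
-- so its distance to `B` is the length of the tangents from `B`.
lemma inner_incenter_vsub {I : Pt}
    (hI : dist B C • (A -ᵥ I) + dist C A • (B -ᵥ I) + dist A B • (C -ᵥ I) = 0) :
    ⟪I -ᵥ B, C -ᵥ B⟫ = dist B C * (dist A B + dist B C - dist C A) / 2 := by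
  rcases eq_or_ne B C with rfl | hBC
  · simp
  have hperim : dist B C + dist C A + dist A B ≠ 0 := (perimeter_pos_of_ne hBC).ne'
  have hsum : (dist B C + dist C A + dist A B) • (I -ᵥ B) =
      dist B C • (A -ᵥ B) + dist A B • (C -ᵥ B) := by
    rw [← vsub_sub_vsub_cancel_right A B I, ← vsub_sub_vsub_cancel_right C B I,
      ← neg_vsub_eq_vsub_rev B I, ← sub_eq_zero, ← neg_eq_zero, ← hI]
    module
  apply mul_left_cancel₀ hperim
  rw [← real_inner_smul_left, hsum, inner_add_left, real_inner_smul_left, real_inner_smul_left,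
    inner_vsub_vsub_eq_dist_sq, real_inner_self_eq_norm_sq, ← dist_eq_norm_vsub, dist_comm C B]
  ring

lemma darbouxForm_incenter {I : Pt}
    (hI : dist B C • (A -ᵥ I) + dist C A • (B -ᵥ I) + dist A B • (C -ᵥ I) = 0) :
    darbouxForm A B C I = 0 := by
  have hBCA : dist C A • (B -ᵥ I) + dist A B • (C -ᵥ I) + dist B C • (A -ᵥ I) = 0 := by
    rw [← hI]
    abel
  have hCAB : dist A B • (C -ᵥ I) + dist B C • (A -ᵥ I) + dist C A • (B -ᵥ I) = 0 := by
    rw [← hI]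
    abel
  have hACB : dist C B • (A -ᵥ I) + dist B A • (C -ᵥ I) + dist A C • (B -ᵥ I) = 0 := by
    rw [← hI, dist_comm C B, dist_comm B A, dist_comm A C]
    abel
  have hBAC : dist A C • (B -ᵥ I) + dist C B • (A -ᵥ I) + dist B A • (C -ᵥ I) = 0 := by
    rw [← hACB]
    abel
  have hCBA : dist B A • (C -ᵥ I) + dist A C • (B -ᵥ I) + dist C B • (A -ᵥ I) = 0 := by
    rw [← hACB]
    abel
  rw [darbouxForm, inner_incenter_vsub hI, inner_incenter_vsub hBCA, inner_incenter_vsub hCAB,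
    inner_incenter_vsub hACB, inner_incenter_vsub hBAC, inner_incenter_vsub hCBA,
    dist_comm C B, dist_comm B A, dist_comm A C]
  ring

lemma exists_inner_eq_zero_and_inner_eq {u v : V} (huv : v ∉ Submodule.span ℝ {u}) (s : ℝ) :
    ∃ w : V, ⟪w, u⟫ = 0 ∧ ⟪w, v⟫ = s := by
  rw [← Submodule.orthogonal_orthogonal (Submodule.span ℝ {u}), Submodule.mem_orthogonal] at huv
  push Not at huv
  obtain ⟨w, hwu, hwv⟩ := huv
  rw [Submodule.mem_orthogonal_singleton_iff_inner_left] at hwu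
  exact ⟨(s / ⟪w, v⟫) • w, by rw [real_inner_smul_left, hwu, mul_zero],
    by rw [real_inner_smul_left, div_mul_cancel₀ s hwv]⟩

lemma exists_darbouxForm_ne_zero (h : AffineIndependent ℝ ![A, B, C]) :
    ∃ P : Pt, darbouxForm A B C P ≠ 0 := by
  have hBC : B -ᵥ C ≠ 0 := vsub_ne_zero.mpr (h.injective.ne (show (1 : Fin 3) ≠ 2 by decide))
  -- On the perpendicular to `BC` at `B` the first product vanishes, and the second one vanishes
  -- only where `⟪P -ᵥ B, A -ᵥ B⟫` is `0` or `⟪B -ᵥ A, C -ᵥ A⟫`.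
  obtain ⟨s, hs⟩ := (Set.toFinite {0, ⟪B -ᵥ A, C -ᵥ A⟫}).exists_notMem
  obtain ⟨hs₀, hs₁⟩ : s ≠ 0 ∧ s ≠ ⟪B -ᵥ A, C -ᵥ A⟫ := by simpa using hs
  obtain ⟨w, hwC, hwA⟩ :=
    exists_inner_eq_zero_and_inner_eq (vsub_notMem_span_of_affineIndependent h) s
  have hPC : ⟪(w +ᵥ B) -ᵥ C, B -ᵥ C⟫ = ⟪B -ᵥ C, B -ᵥ C⟫ := by
    rw [vadd_vsub_assoc, inner_add_left, ← neg_vsub_eq_vsub_rev C B, inner_neg_right, hwC, neg_zero,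
      zero_add]
  have hPA : ⟪(w +ᵥ B) -ᵥ A, C -ᵥ A⟫ = ⟪B -ᵥ A, C -ᵥ A⟫ - s := by
    rw [vadd_vsub_assoc, inner_add_left, ← hwA, add_comm, sub_eq_add_neg,
      ← vsub_sub_vsub_cancel_right C A B, inner_sub_right w, hwC, zero_sub]
  refine ⟨w +ᵥ B, ?_⟩
  rw [darbouxForm, hPC, hPA, vadd_vsub, hwC, hwA, zero_mul, zero_mul, zero_sub]
  exact neg_ne_zero.mpr (mul_ne_zero
    (mul_ne_zero (inner_self_ne_zero.mpr hBC) (sub_ne_zero.mpr hs₁.symm)) hs₀)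

end DarbouxForm

section DarbouxPoly

variable {ι : Type*} [Fintype ι]

open MvPolynomial in
/-- The polynomial function `P ↦ ⟪P - p, v⟫` in the coordinates of `P`. -/
noncomputable def innerSubPoly (p v : EuclideanSpace ℝ ι) : MvPolynomial ι ℝ :=
  ∑ i, C (v i) * (X i - C (p i))

lemma eval_innerSubPoly (p v P : EuclideanSpace ℝ ι) :
    MvPolynomial.eval P (innerSubPoly p v) = ⟪P - p, v⟫ := by
  simp [innerSubPoly, PiLp.inner_apply]

lemma totalDegree_innerSubPoly_le (p v : EuclideanSpace ℝ ι) :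
    (innerSubPoly p v).totalDegree ≤ 1 := by
  refine MvPolynomial.totalDegree_finsetSum_le fun i _ ↦ ?_
  calc (MvPolynomial.C (v i) * (MvPolynomial.X i - MvPolynomial.C (p i))).totalDegree
      ≤ (MvPolynomial.X i - MvPolynomial.C (p i) : MvPolynomial ι ℝ).totalDegree := by
        simpa using MvPolynomial.totalDegree_mul (MvPolynomial.C (v i))
          (MvPolynomial.X i - MvPolynomial.C (p i))
    _ ≤ (MvPolynomial.X i : MvPolynomial ι ℝ).totalDegree := MvPolynomial.totalDegree_sub_C_le _ _
    _ = 1 := MvPolynomial.totalDegree_X i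

/-- The polynomial in the coordinates of `P` whose value at `P` is `darbouxForm A B C P`. -/
noncomputable def darbouxPoly (A B C : EuclideanSpace ℝ ι) : MvPolynomial ι ℝ :=
  innerSubPoly B (C - B) * innerSubPoly C (A - C) * innerSubPoly A (B - A) -
    innerSubPoly C (B - C) * innerSubPoly A (C - A) * innerSubPoly B (A - B)

lemma eval_darbouxPoly (A B C P : EuclideanSpace ℝ ι) :
    MvPolynomial.eval P (darbouxPoly A B C) = darbouxForm A B C P := by
  simp only [darbouxPoly, darbouxForm, map_sub, map_mul, eval_innerSubPoly, vsub_eq_sub]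

lemma totalDegree_darbouxPoly_le (A B C : EuclideanSpace ℝ ι) :
    (darbouxPoly A B C).totalDegree ≤ 3 := by
  have hprod (p q r u v w : EuclideanSpace ℝ ι) :
      (innerSubPoly p u * innerSubPoly q v * innerSubPoly r w).totalDegree ≤ 3 := by
    grw [MvPolynomial.totalDegree_mul, MvPolynomial.totalDegree_mul, totalDegree_innerSubPoly_le,
      totalDegree_innerSubPoly_le, totalDegree_innerSubPoly_le]
  exact (MvPolynomial.totalDegree_sub _ _).trans (max_le (hprod ..) (hprod ..))

lemma eval_darbouxPoly_midpoint (A B C H P : EuclideanSpace ℝ ι) :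
    MvPolynomial.eval (midpoint ℝ P H).ofLp
      (darbouxPoly (midpoint ℝ A H) (midpoint ℝ B H) (midpoint ℝ C H)) =
      (1 / 2) ^ 6 * darbouxForm A B C P := by
  rw [eval_darbouxPoly, ← darbouxForm_homothety A B C P H]
  simp only [homothety_one_half, midpoint_comm H]

lemma exists_cubic_eval_midpoint_eq_zero {A B C : EuclideanSpace ℝ ι}
    (hABC : AffineIndependent ℝ ![A, B, C]) (H : EuclideanSpace ℝ ι) :
    ∃ f : MvPolynomial ι ℝ, f ≠ 0 ∧ f.totalDegree ≤ 3 ∧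
      ∀ P, darbouxForm A B C P = 0 → MvPolynomial.eval (midpoint ℝ P H).ofLp f = 0 := by
  refine ⟨darbouxPoly (midpoint ℝ A H) (midpoint ℝ B H) (midpoint ℝ C H), fun hzero ↦ ?_,
    totalDegree_darbouxPoly_le _ _ _, fun P hP ↦ ?_⟩
  · obtain ⟨P, hP⟩ := exists_darbouxForm_ne_zero hABC
    have heval := eval_darbouxPoly_midpoint A B C H P
    rw [hzero, map_zero] at heval
    exact mul_ne_zero (by norm_num) hP heval.symm
  · rw [eval_darbouxPoly_midpoint, hP, mul_zero]

theorem stmt5_general {A B C O I H : EuclideanSpace ℝ ι}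
    (hABC : AffineIndependent ℝ ![A, B, C])
    {a b c : ℝ} (ha : a = dist B C) (hb : b = dist C A) (hc : c = dist A B)
    (hI : I = (a / (a + b + c)) • A + (b / (a + b + c)) • B + (c / (a + b + c)) • C)
    (hOB : dist O A = dist O B) (hOC : dist O A = dist O C)
    (hH : H = A + B + C - (2 : ℝ) • O) :
    ∃ f : MvPolynomial ι ℝ, f ≠ 0 ∧ f.totalDegree ≤ 3 ∧
      ∀ P ∈ ({midpoint ℝ A H, midpoint ℝ B H, midpoint ℝ C H,
          midpoint ℝ B C, midpoint ℝ C A, midpoint ℝ A B,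
          midpoint ℝ I H, midpoint ℝ O H, H, O} : Set (EuclideanSpace ℝ ι)),
        MvPolynomial.eval P f = 0 := by
  have hBC : B ≠ C := hABC.injective.ne (show (1 : Fin 3) ≠ 2 by decide)
  have hI₀ : a • (A - I) + b • (B - I) + c • (C - I) = 0 :=
    smul_sub_add_smul_sub_add_smul_sub_eq_zero
      (ha ▸ hb ▸ hc ▸ (perimeter_pos_of_ne hBC).ne') hI
  have hH₀ : H -ᵥ O = (A -ᵥ O) + (B -ᵥ O) + (C -ᵥ O) := by
    simp only [hH, vsub_eq_sub]
    module
  have hM₁ : midpoint ℝ (Equiv.pointReflection O A) H = midpoint ℝ B C :=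
    midpoint_pointReflection_eq_midpoint hH₀
  have hM₂ : midpoint ℝ (Equiv.pointReflection O B) H = midpoint ℝ C A :=
    midpoint_pointReflection_eq_midpoint (by rw [hH₀]; abel)
  have hM₃ : midpoint ℝ (Equiv.pointReflection O C) H = midpoint ℝ A B :=
    midpoint_pointReflection_eq_midpoint (by rw [hH₀]; abel)
  have hOH : midpoint ℝ (Equiv.pointReflection O H) H = O := midpoint_pointReflection_left O H
  obtain ⟨f, hf, hdeg, hmid⟩ := exists_cubic_eval_midpoint_eq_zero hABC H
  have hrefl (P : EuclideanSpace ℝ ι) (hP : darbouxForm A B C P = 0) :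
      MvPolynomial.eval (midpoint ℝ (Equiv.pointReflection O P) H).ofLp f = 0 :=
    hmid _ (by rw [darbouxForm_pointReflection hOB hOC, hP, neg_zero])
  have hHform : darbouxForm A B C H = 0 := darbouxForm_orthocenter hH₀ hOB hOC
  refine ⟨f, hf, hdeg, ?_⟩
  rintro P (rfl | rfl | rfl | rfl | rfl | rfl | rfl | rfl | hP | hP)
  · exact hmid A (darbouxForm_self_left A B C)
  · exact hmid B (darbouxForm_self_middle A B C)
  · exact hmid C (darbouxForm_self_right A B C)
  · exact hM₁ ▸ hrefl A (darbouxForm_self_left A B C)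
  · exact hM₂ ▸ hrefl B (darbouxForm_self_middle A B C)
  · exact hM₃ ▸ hrefl C (darbouxForm_self_right A B C)
  · exact hmid I (darbouxForm_incenter (ha ▸ hb ▸ hc ▸ hI₀))
  · exact hmid O (darbouxForm_circumcenter hOB hOC)
  · rw [hP, ← midpoint_self ℝ H]
    exact hmid H hHform
  · rw [hP, ← hOH]
    exact hrefl H hHform

end DarbouxPoly

theorem stmt5 (A B C O : EuclideanSpace ℝ (Fin 2))
    (hABC : AffineIndependent ℝ ![A, B, C])
    (a b c : ℝ) (ha : a = dist B C) (hb : b = dist C A) (hc : c = dist A B)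
    (I H E E₁ E₂ E₃ M₁ M₂ M₃ : EuclideanSpace ℝ (Fin 2))
    (hI : I = bary A B C a b c)
    (hO : dist O A = dist O B ∧ dist O A = dist O C)
    (hH : H = A + B + C - (2 : ℝ) • O)
    (hE : E = midpoint ℝ O H)
    (hE₁ : E₁ = midpoint ℝ A H) (hE₂ : E₂ = midpoint ℝ B H)
    (hE₃ : E₃ = midpoint ℝ C H)
    (hM₁ : M₁ = midpoint ℝ B C) (hM₂ : M₂ = midpoint ℝ C A)
    (hM₃ : M₃ = midpoint ℝ A B) :
    ∃ f : MvPolynomial (Fin 2) ℝ, f ≠ 0 ∧ f.totalDegree ≤ 3 ∧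
      mvEval f E₁ = 0 ∧ mvEval f E₂ = 0 ∧ mvEval f E₃ = 0 ∧
      mvEval f M₁ = 0 ∧ mvEval f M₂ = 0 ∧ mvEval f M₃ = 0 ∧
      mvEval f (midpoint ℝ I H) = 0 ∧ mvEval f E = 0 ∧
      mvEval f H = 0 ∧ mvEval f O = 0 := by
  obtain ⟨f, hf, hdeg, hzero⟩ := stmt5_general hABC ha hb hc hI hO.1 hO.2 hH
  subst hE hE₁ hE₂ hE₃ hM₁ hM₂ hM₃
  exact ⟨f, hf, hdeg, by simpa [mvEval] using hzero⟩
end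

section
/- Let A, B, C be a nondegenerate triangle in the Euclidean plane with side lengths a = dist B C, b = dist C A, c = dist A B, incenter I, circumcenter O, and mittenpunkt Mi (barycentric weights (a(b+c−a), b(c+a−b), c(a+b−c))). Let A₁, A₂, A₃ be the arc midpoints: A₁ is the point of the circumcircle of ABC distinct from A and collinear with A and I, and similarly A₂ for B and A₃ for C. Let S be the Schiffler point, the barycentric combination of A, B, C with weights (a(b+c−a)(c+a)(a+b), b(c+a−b)(a+b)(b+c), c(a+b−c)(b+c)(c+a)). Then there exists a nonzero real polynomial f in two variables of total degree at most 2 vanishing at each of the seven points A₁, A₂, A₃, O, I, midpoint(Mi, I), S; moreover f can be chosen so that the conic it defines is rectangular (the coefficients of X² and Y² sum to zero). -/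
open EuclideanGeometry RealInnerProductSpace

/-!
The incenter `I` is the orthocenter of the triangle `A₁ A₂ A₃` of arc midpoints, the line `A I`
being the altitude from `A₁`. Hence the line pairs `A I ∪ A₂ A₃`, `B I ∪ A₃ A₁`, `C I ∪ A₁ A₂` span
a pencil of rectangular conics through `A₁`, `A₂`, `A₃`, `I`. In barycentric coordinates, with these
pairs scaled as in `bisectorPair`, the combination with coefficients `a, b, c` also passes through
`O`, the midpoint of `Mi` and `I`, and `S`: it is the Jerabek hyperbola of `A₁ A₂ A₃`. It is the
zero polynomial only for an equilateral triangle, where the last three points coincide with `I` and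
any member of the pencil will do.
-/

section RectangularConics

open MvPolynomial

theorem coeff_single_two_mul_of_totalDegree_le_one {σ R : Type*} [CommSemiring R]
    {p q : MvPolynomial σ R} (hp : p.totalDegree ≤ 1) (hq : q.totalDegree ≤ 1) (i : σ) :
    coeff (Finsupp.single i 2) (p * q) =
      coeff (Finsupp.single i 1) p * coeff (Finsupp.single i 1) q := by
  classical
  have vanish {r : MvPolynomial σ R} (hr : r.totalDegree ≤ 1) :
      coeff (Finsupp.single i 2) r = 0 := by
    refine coeff_eq_zero_of_totalDegree_lt (hr.trans_lt ?_)
    rw [← Finsupp.degree_apply, Finsupp.degree_single]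
    exact one_lt_two
  rw [coeff_mul, Finsupp.antidiagonal_single, Finset.sum_map,
    Finset.Nat.sum_antidiagonal_eq_sum_range_succ_mk]
  simp [Finset.sum_range_succ, vanish hp, vanish hq, -Finsupp.single_tsub]

/-- The sum of the coefficients of `X²` and `Y²`; it vanishes for rectangular conics. -/
noncomputable def squareCoeffSum : MvPolynomial (Fin 2) ℝ →ₗ[ℝ] ℝ :=
  lcoeff ℝ (Finsupp.single 0 2) + lcoeff ℝ (Finsupp.single 1 2)

/-- The space of equations of rectangular conics, including the degenerate ones (among them `0`). -/
noncomputable def rectangularConics : Submodule ℝ (MvPolynomial (Fin 2) ℝ) :=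
  restrictTotalDegree (Fin 2) ℝ 2 ⊓ LinearMap.ker squareCoeffSum

theorem mem_rectangularConics {f : MvPolynomial (Fin 2) ℝ} :
    f ∈ rectangularConics ↔ f.totalDegree ≤ 2 ∧
      coeff (Finsupp.single 0 2) f + coeff (Finsupp.single 1 2) f = 0 := by
  simp [rectangularConics, squareCoeffSum, mem_restrictTotalDegree]

/-- Twice the signed area of the triangle `P Q R`. -/
def doubleArea (P Q R : EuclideanSpace ℝ (Fin 2)) : ℝ :=
  (Q 0 - P 0) * (R 1 - P 1) - (Q 1 - P 1) * (R 0 - P 0)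

/-- The equation of the line `Q R`, normalized so that its value at `P` is `doubleArea P Q R`. -/
noncomputable def linePoly (Q R : EuclideanSpace ℝ (Fin 2)) : MvPolynomial (Fin 2) ℝ :=
  (Q 1 - R 1) • X 0 + (R 0 - Q 0) • X 1 + C (Q 0 * R 1 - Q 1 * R 0)

/-- The equation of the line `l u + m v + n w = 0` in barycentric coordinates `(u, v, w)` with
respect to the triangle `P Q R`. -/
noncomputable def baryLine (P Q R : EuclideanSpace ℝ (Fin 2)) (l m n : ℝ) :
    MvPolynomial (Fin 2) ℝ :=
  l • linePoly Q R + m • linePoly R P + n • linePoly P Q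

variable (P Q R : EuclideanSpace ℝ (Fin 2)) (l m n l' m' n' : ℝ)

theorem dist_sq_eq_coord : dist P Q ^ 2 = (P 0 - Q 0) ^ 2 + (P 1 - Q 1) ^ 2 := by
  rw [EuclideanSpace.dist_sq_eq, Fin.sum_univ_two, Real.dist_eq, Real.dist_eq, sq_abs, sq_abs]

theorem totalDegree_linePoly_le : (linePoly Q R).totalDegree ≤ 1 := by
  have hX (r : ℝ) (i : Fin 2) : (r • X i : MvPolynomial (Fin 2) ℝ).totalDegree ≤ 1 :=
    (totalDegree_smul_le _ _).trans (totalDegree_X i).le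
  refine (totalDegree_add _ _).trans (max_le ((totalDegree_add _ _).trans ?_) ?_)
  · exact max_le (hX _ 0) (hX _ 1)
  · exact (totalDegree_C _).le.trans zero_le_one

theorem totalDegree_baryLine_le : (baryLine P Q R l m n).totalDegree ≤ 1 := by
  have hsmul (r : ℝ) (S T : EuclideanSpace ℝ (Fin 2)) : (r • linePoly S T).totalDegree ≤ 1 :=
    (totalDegree_smul_le _ _).trans (totalDegree_linePoly_le S T)
  exact (totalDegree_add _ _).trans
    (max_le ((totalDegree_add _ _).trans (max_le (hsmul ..) (hsmul ..))) (hsmul ..))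

theorem mvEval_linePoly : mvEval (linePoly Q R) P = doubleArea P Q R := by
  simp only [mvEval, linePoly, doubleArea, map_add, smul_eval, eval_X, eval_C]
  ring

theorem mvEval_baryLine (T : EuclideanSpace ℝ (Fin 2)) : mvEval (baryLine P Q R l m n) T =
    l * doubleArea T Q R + m * doubleArea T R P + n * doubleArea T P Q := by
  simp only [← mvEval_linePoly]
  simp only [mvEval, baryLine, map_add, smul_eval]

theorem coeff_single_zero_linePoly : coeff (Finsupp.single 0 1) (linePoly Q R) = Q 1 - R 1 := by
  simp [linePoly, coeff_X, coeff_C, Finsupp.single_left_inj, eq_comm (a := (0 : Fin 2 →₀ ℕ))]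

theorem coeff_single_one_linePoly : coeff (Finsupp.single 1 1) (linePoly Q R) = R 0 - Q 0 := by
  simp [linePoly, coeff_X, coeff_C, Finsupp.single_left_inj, eq_comm (a := (0 : Fin 2 →₀ ℕ))]

/-- The right-hand side is, up to a factor, the bilinear form expressing perpendicularity of two
lines in barycentric coordinates. -/
theorem two_mul_squareCoeffSum_baryLine_mul {a b c : ℝ}
    (ha : a = dist Q R) (hb : b = dist R P) (hc : c = dist P Q) :
    2 * squareCoeffSum (baryLine P Q R l m n * baryLine P Q R l' m' n') =
      2 * (a ^ 2 * (l * l') + b ^ 2 * (m * m') + c ^ 2 * (n * n'))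
        - (b ^ 2 + c ^ 2 - a ^ 2) * (m * n' + n * m')
        - (c ^ 2 + a ^ 2 - b ^ 2) * (n * l' + l * n')
        - (a ^ 2 + b ^ 2 - c ^ 2) * (l * m' + m * l') := by
  have hcoeff := coeff_single_two_mul_of_totalDegree_le_one
    (totalDegree_baryLine_le P Q R l m n) (totalDegree_baryLine_le P Q R l' m' n')
  simp only [squareCoeffSum, LinearMap.add_apply, lcoeff_apply, hcoeff]
  simp only [baryLine, coeff_add, coeff_smul, smul_eq_mul, coeff_single_zero_linePoly,
    coeff_single_one_linePoly, ha, hb, hc, dist_sq_eq_coord]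
  ring

end RectangularConics

section BarycentricWeights

variable {A B C : EuclideanSpace ℝ (Fin 2)}

/-- `P` has homogeneous barycentric coordinates `(u : v : w)` with respect to `A B C`: the areas it
spans with the three sides are proportional to `u, v, w`. The factor is not required to be nonzero,
since the areas of a nondegenerate triangle do not all vanish. -/
def HasBaryWeights (A B C P : EuclideanSpace ℝ (Fin 2)) (u v w : ℝ) : Prop :=
  ∃ k, doubleArea P B C = k * u ∧ doubleArea P C A = k * v ∧ doubleArea P A B = k * w

theorem doubleArea_rotate (P Q R : EuclideanSpace ℝ (Fin 2)) :
    doubleArea Q R P = doubleArea P Q R := by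
  unfold doubleArea; ring

theorem doubleArea_add_doubleArea_add_doubleArea (A B C P : EuclideanSpace ℝ (Fin 2)) :
    doubleArea P B C + doubleArea P C A + doubleArea P A B = doubleArea A B C := by
  unfold doubleArea; ring

theorem bary_rotate (P Q R : EuclideanSpace ℝ (Fin 2)) (u v w : ℝ) :
    bary Q R P v w u = bary P Q R u v w := by
  unfold bary
  rw [show v + w + u = u + v + w by ring]
  abel

theorem doubleArea_bary_first (A B C : EuclideanSpace ℝ (Fin 2)) {u v w : ℝ} (h : u + v + w ≠ 0) :
    doubleArea (bary A B C u v w) B C = doubleArea A B C / (u + v + w) * u := by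
  simp only [doubleArea, bary, PiLp.add_apply, PiLp.smul_apply, smul_eq_mul]
  field_simp
  ring

theorem doubleArea_bary_second (A B C : EuclideanSpace ℝ (Fin 2)) {u v w : ℝ} (h : u + v + w ≠ 0) :
    doubleArea (bary A B C u v w) C A = doubleArea A B C / (u + v + w) * v := by
  rw [← bary_rotate, doubleArea_bary_first B C A (by rwa [← add_rotate]), doubleArea_rotate,
    ← add_rotate]

theorem doubleArea_bary_third (A B C : EuclideanSpace ℝ (Fin 2)) {u v w : ℝ} (h : u + v + w ≠ 0) :
    doubleArea (bary A B C u v w) A B = doubleArea A B C / (u + v + w) * w := by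
  rw [bary_rotate, doubleArea_bary_first C A B (by rwa [add_rotate]), ← doubleArea_rotate,
    add_rotate]

theorem doubleArea_midpoint (P P' Q R : EuclideanSpace ℝ (Fin 2)) :
    doubleArea (midpoint ℝ P P') Q R = (doubleArea P Q R + doubleArea P' Q R) / 2 := by
  simp only [doubleArea, midpoint_eq_smul_add, PiLp.add_apply, PiLp.smul_apply, smul_eq_mul,
    invOf_eq_inv]
  ring

theorem hasBaryWeights_bary (A B C : EuclideanSpace ℝ (Fin 2)) {u v w : ℝ} (h : u + v + w ≠ 0) :
    HasBaryWeights A B C (bary A B C u v w) u v w :=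
  ⟨_, doubleArea_bary_first A B C h, doubleArea_bary_second A B C h, doubleArea_bary_third A B C h⟩

theorem hasBaryWeights_midpoint (A B C : EuclideanSpace ℝ (Fin 2)) {u v w x y z : ℝ}
    (h : u + v + w ≠ 0) (h' : x + y + z ≠ 0) :
    HasBaryWeights A B C (midpoint ℝ (bary A B C u v w) (bary A B C x y z))
      (u * (x + y + z) + x * (u + v + w)) (v * (x + y + z) + y * (u + v + w))
      (w * (x + y + z) + z * (u + v + w)) := by
  refine ⟨doubleArea A B C / (2 * (u + v + w) * (x + y + z)), ?_, ?_, ?_⟩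
  · rw [doubleArea_midpoint, doubleArea_bary_first A B C h, doubleArea_bary_first A B C h']
    field_simp
  · rw [doubleArea_midpoint, doubleArea_bary_second A B C h, doubleArea_bary_second A B C h']
    field_simp
  · rw [doubleArea_midpoint, doubleArea_bary_third A B C h, doubleArea_bary_third A B C h']
    field_simp

end BarycentricWeights

section Triangle

theorem triangle_inequalities_of_not_collinear {V E : Type*} [NormedAddCommGroup V]
    [NormedSpace ℝ V] [StrictConvexSpace ℝ V] [MetricSpace E] [NormedAddTorsor V E] {A B C : E}
    {a b c : ℝ} (h : ¬ Collinear ℝ {A, B, C}) (ha : a = dist B C) (hb : b = dist C A)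
    (hc : c = dist A B) : a < b + c ∧ b < c + a ∧ c < a + b := by
  have key {P Q R : E} (hPQR : ¬ Collinear ℝ {P, Q, R}) : dist P R < dist P Q + dist Q R :=
    dist_lt_dist_add_dist_iff.2 fun hw => hPQR hw.collinear
  have hBC := key (P := B) (Q := A) (R := C) (by rwa [Set.insert_comm])
  have hCA := key h
  have hAB := key (P := A) (Q := C) (R := B) (by rwa [Set.pair_comm])
  rw [dist_comm B A, dist_comm A C, ← ha, ← hb, ← hc] at hBC
  rw [dist_comm A C, ← ha, ← hb, ← hc] at hCA
  rw [dist_comm A C, dist_comm C B, ← ha, ← hb, ← hc] at hAB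
  exact ⟨by linarith, by linarith, by linarith⟩

variable {A B C O P : EuclideanSpace ℝ (Fin 2)} {a b c : ℝ}

theorem four_mul_doubleArea_sq (ha : a = dist B C) (hb : b = dist C A) (hc : c = dist A B) :
    4 * doubleArea A B C ^ 2 = (a + b + c) * (b + c - a) * (c + a - b) * (a + b - c) := by
  have expand : (a + b + c) * (b + c - a) * (c + a - b) * (a + b - c) =
      4 * b ^ 2 * c ^ 2 - (b ^ 2 + c ^ 2 - a ^ 2) ^ 2 := by ring
  rw [expand, ha, hb, hc]
  simp only [dist_sq_eq_coord, doubleArea]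
  ring

theorem doubleArea_ne_zero_of_not_collinear (h : ¬ Collinear ℝ {A, B, C}) :
    doubleArea A B C ≠ 0 := by
  obtain ⟨ha, hb, hc⟩ := triangle_inequalities_of_not_collinear h rfl rfl rfl
  have hpos : 0 < 4 * doubleArea A B C ^ 2 := by
    rw [four_mul_doubleArea_sq rfl rfl rfl]
    exact mul_pos (mul_pos (mul_pos (by linarith) (sub_pos.2 ha)) (sub_pos.2 hb)) (sub_pos.2 hc)
  intro h0
  simp [h0] at hpos

theorem doubleArea_eq_zero_of_collinear (h : Collinear ℝ {A, B, C}) : doubleArea A B C = 0 := by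
  obtain ⟨d, hd⟩ := (collinear_iff_of_mem (p₀ := A) (by simp)).1 h
  obtain ⟨s, rfl⟩ := hd B (by simp)
  obtain ⟨t, rfl⟩ := hd C (by simp)
  simp only [doubleArea, vadd_eq_add, PiLp.add_apply, PiLp.smul_apply, smul_eq_mul]
  ring

theorem doubleArea_mul_sub (A B C P : EuclideanSpace ℝ (Fin 2)) (i : Fin 2) :
    doubleArea A B C * (P i - A i) =
      doubleArea P C A * (B i - A i) + doubleArea P A B * (C i - A i) := by
  fin_cases i <;> simp only [doubleArea, Fin.zero_eta, Fin.mk_one] <;> ring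

theorem eq_of_doubleArea_eq_zero (hABC : doubleArea A B C ≠ 0) (hCA : doubleArea P C A = 0)
    (hAB : doubleArea P A B = 0) : P = A := by
  ext i
  have h := doubleArea_mul_sub A B C P i
  rw [hCA, hAB, zero_mul, zero_mul, add_zero] at h
  exact sub_eq_zero.1 ((mul_eq_zero.1 h).resolve_left hABC)

theorem doubleArea_sq_mul_dist_sq (O P : EuclideanSpace ℝ (Fin 2))
    (ha : a = dist B C) (hb : b = dist C A) (hc : c = dist A B) :
    doubleArea A B C ^ 2 * dist O P ^ 2 =
      doubleArea A B C * (doubleArea P B C * dist O A ^ 2 + doubleArea P C A * dist O B ^ 2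
        + doubleArea P A B * dist O C ^ 2)
      - (a ^ 2 * (doubleArea P C A * doubleArea P A B)
        + b ^ 2 * (doubleArea P A B * doubleArea P B C)
        + c ^ 2 * (doubleArea P B C * doubleArea P C A)) := by
  simp only [ha, hb, hc, dist_sq_eq_coord, doubleArea]
  ring

theorem circumcircle_equation (ha : a = dist B C) (hb : b = dist C A) (hc : c = dist A B)
    (hOB : dist O A = dist O B) (hOC : dist O A = dist O C) (hP : dist O P = dist O A) :
    a ^ 2 * (doubleArea P C A * doubleArea P A B) + b ^ 2 * (doubleArea P A B * doubleArea P B C)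
      + c ^ 2 * (doubleArea P B C * doubleArea P C A) = 0 := by
  have key := doubleArea_sq_mul_dist_sq O P ha hb hc
  rw [hP, ← hOB, ← hOC, ← doubleArea_add_doubleArea_add_doubleArea A B C P] at key
  linear_combination key

theorem four_mul_doubleArea_mul_doubleArea_circumcenter (ha : a = dist B C) (hb : b = dist C A)
    (hc : c = dist A B) (hOB : dist O A = dist O B) (hOC : dist O A = dist O C) :
    4 * doubleArea A B C * doubleArea O B C = a ^ 2 * (b ^ 2 + c ^ 2 - a ^ 2) := by
  have expand : 4 * doubleArea A B C * doubleArea O B C = a ^ 2 * (b ^ 2 + c ^ 2 - a ^ 2)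
      + (c ^ 2 - a ^ 2 - b ^ 2) * (dist O A ^ 2 - dist O B ^ 2)
      + (b ^ 2 - a ^ 2 - c ^ 2) * (dist O A ^ 2 - dist O C ^ 2) := by
    simp only [ha, hb, hc, dist_sq_eq_coord, doubleArea]
    ring
  rw [expand, ← hOB, ← hOC]
  ring

theorem hasBaryWeights_circumcenter (hABC : doubleArea A B C ≠ 0) (ha : a = dist B C)
    (hb : b = dist C A) (hc : c = dist A B) (hOB : dist O A = dist O B)
    (hOC : dist O A = dist O C) :
    HasBaryWeights A B C O (a ^ 2 * (b ^ 2 + c ^ 2 - a ^ 2)) (b ^ 2 * (c ^ 2 + a ^ 2 - b ^ 2))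
      (c ^ 2 * (a ^ 2 + b ^ 2 - c ^ 2)) := by
  have hA := four_mul_doubleArea_mul_doubleArea_circumcenter ha hb hc hOB hOC
  have hB := four_mul_doubleArea_mul_doubleArea_circumcenter hb hc ha (hOB.symm.trans hOC) hOB.symm
  have hC := four_mul_doubleArea_mul_doubleArea_circumcenter hc ha hb hOC.symm (hOC.symm.trans hOB)
  rw [doubleArea_rotate] at hB
  rw [← doubleArea_rotate] at hC
  refine ⟨(4 * doubleArea A B C)⁻¹, ?_, ?_, ?_⟩
  · rw [← hA]; field_simp
  · rw [← hB]; field_simp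
  · rw [← hC]; field_simp

theorem hasBaryWeights_arcMidpoint (hABC : doubleArea A B C ≠ 0) (ha : a = dist B C)
    (hb : b = dist C A) (hc : c = dist A B) (hb₀ : 0 < b) (hc₀ : 0 < c)
    (hOB : dist O A = dist O B) (hOC : dist O A = dist O C) (hP : dist O P = dist O A)
    (hPA : P ≠ A) (hcol : Collinear ℝ {A, bary A B C a b c, P}) :
    HasBaryWeights A B C P (-a ^ 2) (b * (b + c)) (c * (b + c)) := by
  have ha₀ : 0 ≤ a := ha ▸ dist_nonneg
  have bisector : c * doubleArea P C A = b * doubleArea P A B := by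
    have expand : (a + b + c) * doubleArea A (bary A B C a b c) P =
        b * doubleArea P A B - c * doubleArea P C A := by
      have : a + b + c ≠ 0 := by positivity
      simp only [doubleArea, bary, PiLp.add_apply, PiLp.smul_apply, smul_eq_mul]
      field_simp
      ring
    rw [doubleArea_eq_zero_of_collinear hcol] at expand
    linear_combination expand
  have circle := circumcircle_equation ha hb hc hOB hOC hP
  have hCA : doubleArea P C A ≠ 0 := by
    intro h
    refine hPA (eq_of_doubleArea_eq_zero hABC h ?_)
    simpa [h, hb₀.ne'] using bisector.symm
  have ratio : a ^ 2 * doubleArea P C A + b * (b + c) * doubleArea P B C = 0 := by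
    refine (mul_eq_zero.1 ?_).resolve_left (mul_ne_zero hc₀.ne' hCA)
    linear_combination b * circle + (a ^ 2 * doubleArea P C A + b ^ 2 * doubleArea P B C) * bisector
  refine ⟨doubleArea P C A / (b * (b + c)), ?_, ?_, ?_⟩
  · field_simp
    linear_combination ratio
  · field_simp
  · field_simp
    linear_combination -bisector

end Triangle

section Pencil

variable {A B C P : EuclideanSpace ℝ (Fin 2)} {a b c u v w : ℝ}

/-- The line pair `A I ∪ A₂ A₃` of a triangle with side lengths `a, b, c` in barycentric
coordinates: `A I` is `c v = b w`, and `A₂ A₃` is the perpendicular bisector of `A I`. -/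
def bisectorForm (a b c u v w : ℝ) : ℝ :=
  (c * v - b * w) * (-(b * c) * u + c * (c + a) * v + b * (a + b) * w)

/-- The quadratic polynomial in Cartesian coordinates that corresponds to `bisectorForm`. -/
noncomputable def bisectorPair (A B C : EuclideanSpace ℝ (Fin 2)) (a b c : ℝ) :
    MvPolynomial (Fin 2) ℝ :=
  baryLine A B C 0 c (-b) * baryLine A B C (-(b * c)) (c * (c + a)) (b * (a + b))

theorem bisectorPair_mem_rectangularConics (ha : a = dist B C) (hb : b = dist C A)
    (hc : c = dist A B) : bisectorPair A B C a b c ∈ rectangularConics := by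
  refine Submodule.mem_inf.2 ⟨?_, ?_⟩
  · exact (MvPolynomial.mem_restrictTotalDegree ..).2 ((MvPolynomial.totalDegree_mul _ _).trans
      (add_le_add (totalDegree_baryLine_le ..) (totalDegree_baryLine_le ..)))
  · have perpendicular := two_mul_squareCoeffSum_baryLine_mul A B C
      0 c (-b) (-(b * c)) (c * (c + a)) (b * (a + b)) ha hb hc
    rw [LinearMap.mem_ker, bisectorPair]
    linear_combination perpendicular / 2

theorem mvEval_bisectorPair : mvEval (bisectorPair A B C a b c) P =
    bisectorForm a b c (doubleArea P B C) (doubleArea P C A) (doubleArea P A B) := by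
  have hmul (f g : MvPolynomial (Fin 2) ℝ) : mvEval (f * g) P = mvEval f P * mvEval g P :=
    map_mul _ f g
  rw [bisectorPair, hmul, mvEval_baryLine, mvEval_baryLine, bisectorForm]
  ring

/-- The barycentric equation of the member with coefficients `x, y, z` of the pencil of rectangular
conics through the arc midpoints and the incenter. -/
def pencilForm (x y z a b c u v w : ℝ) : ℝ :=
  x * bisectorForm a b c u v w + y * bisectorForm b c a v w u + z * bisectorForm c a b w u v

/-- The quadratic polynomial in Cartesian coordinates that corresponds to `pencilForm`. -/
noncomputable def pencilConic (A B C : EuclideanSpace ℝ (Fin 2)) (x y z a b c : ℝ) :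
    MvPolynomial (Fin 2) ℝ :=
  x • bisectorPair A B C a b c + y • bisectorPair B C A b c a + z • bisectorPair C A B c a b

theorem pencilConic_mem_rectangularConics (ha : a = dist B C) (hb : b = dist C A)
    (hc : c = dist A B) (x y z : ℝ) : pencilConic A B C x y z a b c ∈ rectangularConics :=
  add_mem (add_mem
    (Submodule.smul_mem _ x (bisectorPair_mem_rectangularConics ha hb hc))
    (Submodule.smul_mem _ y (bisectorPair_mem_rectangularConics hb hc ha)))
    (Submodule.smul_mem _ z (bisectorPair_mem_rectangularConics hc ha hb))

theorem mvEval_pencilConic (x y z : ℝ) : mvEval (pencilConic A B C x y z a b c) P =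
    pencilForm x y z a b c (doubleArea P B C) (doubleArea P C A) (doubleArea P A B) := by
  simp only [pencilForm, ← mvEval_bisectorPair]
  simp only [mvEval, pencilConic, map_add, MvPolynomial.smul_eval]

theorem HasBaryWeights.mvEval_pencilConic_eq_zero {x y z : ℝ} (hP : HasBaryWeights A B C P u v w)
    (h : pencilForm x y z a b c u v w = 0) : mvEval (pencilConic A B C x y z a b c) P = 0 := by
  obtain ⟨k, hu, hv, hw⟩ := hP
  have homogeneous : pencilForm x y z a b c (k * u) (k * v) (k * w) =
      k ^ 2 * pencilForm x y z a b c u v w := by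
    unfold pencilForm bisectorForm
    ring
  rw [mvEval_pencilConic, hu, hv, hw, homogeneous, h, mul_zero]

theorem pencilConic_rotate (A B C : EuclideanSpace ℝ (Fin 2)) (x y z a b c : ℝ) :
    pencilConic B C A y z x b c a = pencilConic A B C x y z a b c :=
  (add_rotate _ _ _).symm

theorem mvEval_pencilConic_vertex (A B C : EuclideanSpace ℝ (Fin 2)) (x y z a b c : ℝ) :
    mvEval (pencilConic A B C x y z a b c) A =
      doubleArea A B C ^ 2 * (b + c) * (z * b ^ 2 - y * c ^ 2) := by
  rw [mvEval_pencilConic]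
  simp only [pencilForm, bisectorForm, doubleArea]
  ring

theorem pencilConic_ne_zero {x y z : ℝ} (hABC : doubleArea A B C ≠ 0) (hbc : b + c ≠ 0)
    (h : z * b ^ 2 ≠ y * c ^ 2) : pencilConic A B C x y z a b c ≠ 0 := by
  intro h0
  have hA := mvEval_pencilConic_vertex A B C x y z a b c
  rw [h0, mvEval, map_zero] at hA
  exact mul_ne_zero (mul_ne_zero (pow_ne_zero 2 hABC) hbc) (sub_ne_zero.2 h) hA.symm

/-- A sufficient condition for the member with coefficients `x, y, z` of the pencil to pass through
the circumcenter. The coefficients `a, b, c` give the zero polynomial for an equilateral triangle;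
in that case the circumcenter coincides with the incenter and every member qualifies. -/
def IsCircumcentral (x y z a b c : ℝ) : Prop :=
  (x = a ∧ y = b ∧ z = c) ∨ (a = b ∧ b = c)

theorem exists_isCircumcentral_pencilConic_ne_zero (hABC : doubleArea A B C ≠ 0) (ha : 0 < a)
    (hb : 0 < b) (hc : 0 < c) :
    ∃ x y z, IsCircumcentral x y z a b c ∧ pencilConic A B C x y z a b c ≠ 0 := by
  have hBCA : doubleArea B C A ≠ 0 := by rwa [doubleArea_rotate]
  by_cases hbc : b = c
  · by_cases hca : c = a
    · refine ⟨1, 0, 0, .inr ⟨(hbc.trans hca).symm, hbc⟩, ?_⟩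
      rw [← pencilConic_rotate]
      exact pencilConic_ne_zero hBCA (by positivity) (by simp [hc.ne'])
    · refine ⟨a, b, c, .inl ⟨rfl, rfl, rfl⟩, ?_⟩
      rw [← pencilConic_rotate]
      refine pencilConic_ne_zero hBCA (by positivity) fun h => hca ?_
      refine mul_left_cancel₀ (mul_ne_zero ha.ne' hc.ne') ?_
      linear_combination h
  · refine ⟨a, b, c, .inl ⟨rfl, rfl, rfl⟩, ?_⟩
    refine pencilConic_ne_zero hABC (by positivity) fun h => hbc ?_
    refine mul_left_cancel₀ (mul_ne_zero hb.ne' hc.ne') ?_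
    linear_combination h

end Pencil

section PointsOnPencil

variable {A B C O P : EuclideanSpace ℝ (Fin 2)} {x y z a b c : ℝ}

theorem mvEval_pencilConic_incenter (habc : a + b + c ≠ 0) :
    mvEval (pencilConic A B C x y z a b c) (bary A B C a b c) = 0 := by
  refine (hasBaryWeights_bary A B C habc).mvEval_pencilConic_eq_zero ?_
  unfold pencilForm bisectorForm
  ring

theorem mvEval_pencilConic_arcMidpoint (hABC : doubleArea A B C ≠ 0) (ha : a = dist B C)
    (hb : b = dist C A) (hc : c = dist A B) (hb₀ : 0 < b) (hc₀ : 0 < c)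
    (hOB : dist O A = dist O B) (hOC : dist O A = dist O C) (hP : dist O P = dist O A)
    (hPA : P ≠ A) (hcol : Collinear ℝ {A, bary A B C a b c, P}) :
    mvEval (pencilConic A B C x y z a b c) P = 0 := by
  refine (hasBaryWeights_arcMidpoint hABC ha hb hc hb₀ hc₀ hOB hOC hP hPA
    hcol).mvEval_pencilConic_eq_zero ?_
  unfold pencilForm bisectorForm
  ring

theorem mvEval_pencilConic_circumcenter (h : IsCircumcentral x y z a b c)
    (hABC : doubleArea A B C ≠ 0) (ha : a = dist B C) (hb : b = dist C A) (hc : c = dist A B)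
    (hOB : dist O A = dist O B) (hOC : dist O A = dist O C) :
    mvEval (pencilConic A B C x y z a b c) O = 0 := by
  refine (hasBaryWeights_circumcenter hABC ha hb hc hOB hOC).mvEval_pencilConic_eq_zero ?_
  rcases h with ⟨rfl, rfl, rfl⟩ | ⟨rfl, rfl⟩ <;> unfold pencilForm bisectorForm <;> ring

theorem mvEval_pencilConic_midpoint_mittenpunkt_incenter (h : IsCircumcentral x y z a b c)
    (hMi : a * (b + c - a) + b * (c + a - b) + c * (a + b - c) ≠ 0) (hI : a + b + c ≠ 0) :
    mvEval (pencilConic A B C x y z a b c)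
      (midpoint ℝ (bary A B C (a * (b + c - a)) (b * (c + a - b)) (c * (a + b - c)))
        (bary A B C a b c)) = 0 := by
  refine (hasBaryWeights_midpoint A B C hMi hI).mvEval_pencilConic_eq_zero ?_
  rcases h with ⟨rfl, rfl, rfl⟩ | ⟨rfl, rfl⟩ <;> unfold pencilForm bisectorForm <;> ring

theorem mvEval_pencilConic_schiffler (h : IsCircumcentral x y z a b c)
    (hS : a * (b + c - a) * (c + a) * (a + b) + b * (c + a - b) * (a + b) * (b + c)
      + c * (a + b - c) * (b + c) * (c + a) ≠ 0) :
    mvEval (pencilConic A B C x y z a b c) (bary A B C (a * (b + c - a) * (c + a) * (a + b))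
      (b * (c + a - b) * (a + b) * (b + c)) (c * (a + b - c) * (b + c) * (c + a))) = 0 := by
  refine (hasBaryWeights_bary A B C hS).mvEval_pencilConic_eq_zero ?_
  rcases h with ⟨rfl, rfl, rfl⟩ | ⟨rfl, rfl⟩ <;> unfold pencilForm bisectorForm <;> ring

end PointsOnPencil

theorem stmt6 (A B C O : EuclideanSpace ℝ (Fin 2))
    (hABC : AffineIndependent ℝ ![A, B, C])
    (a b c : ℝ) (ha : a = dist B C) (hb : b = dist C A) (hc : c = dist A B)
    (I Mi S A₁ A₂ A₃ : EuclideanSpace ℝ (Fin 2))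
    (hI : I = bary A B C a b c)
    (hO : dist O A = dist O B ∧ dist O A = dist O C)
    (hMi : Mi = bary A B C (a * (b + c - a)) (b * (c + a - b)) (c * (a + b - c)))
    (hA₁ : dist O A₁ = dist O A ∧ A₁ ≠ A ∧ Collinear ℝ ({A, I, A₁} : Set (EuclideanSpace ℝ (Fin 2))))
    (hA₂ : dist O A₂ = dist O A ∧ A₂ ≠ B ∧ Collinear ℝ ({B, I, A₂} : Set (EuclideanSpace ℝ (Fin 2))))
    (hA₃ : dist O A₃ = dist O A ∧ A₃ ≠ C ∧ Collinear ℝ ({C, I, A₃} : Set (EuclideanSpace ℝ (Fin 2))))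
    (hS : S = bary A B C (a * (b + c - a) * (c + a) * (a + b))
      (b * (c + a - b) * (a + b) * (b + c)) (c * (a + b - c) * (b + c) * (c + a))) :
    ∃ f : MvPolynomial (Fin 2) ℝ, f ≠ 0 ∧ f.totalDegree ≤ 2 ∧
      mvEval f A₁ = 0 ∧ mvEval f A₂ = 0 ∧ mvEval f A₃ = 0 ∧
      mvEval f O = 0 ∧ mvEval f I = 0 ∧ mvEval f (midpoint ℝ Mi I) = 0 ∧
      mvEval f S = 0 ∧
      MvPolynomial.coeff (Finsupp.single (0 : Fin 2) 2) f +
        MvPolynomial.coeff (Finsupp.single (1 : Fin 2) 2) f = 0 := by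
  have hcol : ¬ Collinear ℝ {A, B, C} := affineIndependent_iff_not_collinear_set.1 hABC
  have hD := doubleArea_ne_zero_of_not_collinear hcol
  obtain ⟨hx, hy, hz⟩ := triangle_inequalities_of_not_collinear hcol ha hb hc
  obtain ⟨ha₀, hb₀, hc₀⟩ : 0 < a ∧ 0 < b ∧ 0 < c := ⟨by linarith, by linarith, by linarith⟩
  rw [← sub_pos] at hx hy hz
  obtain ⟨x, y, z, hxyz, hf⟩ := exists_isCircumcentral_pencilConic_ne_zero hD ha₀ hb₀ hc₀
  obtain ⟨hdeg, hrect⟩ := mem_rectangularConics.1 (pencilConic_mem_rectangularConics ha hb hc x y z)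
  subst hI hMi hS
  refine ⟨_, hf, hdeg, ?_, ?_, ?_, mvEval_pencilConic_circumcenter hxyz hD ha hb hc hO.1 hO.2,
    mvEval_pencilConic_incenter (by positivity),
    mvEval_pencilConic_midpoint_mittenpunkt_incenter hxyz (by positivity) (by positivity),
    mvEval_pencilConic_schiffler hxyz (by positivity), hrect⟩
  · exact mvEval_pencilConic_arcMidpoint hD ha hb hc hb₀ hc₀ hO.1 hO.2 hA₁.1 hA₁.2.1 hA₁.2.2
  · rw [← bary_rotate] at hA₂
    rw [← pencilConic_rotate]
    exact mvEval_pencilConic_arcMidpoint (by rwa [doubleArea_rotate]) hb hc ha hc₀ ha₀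
      (hO.1.symm.trans hO.2) hO.1.symm (hA₂.1.trans hO.1) hA₂.2.1 hA₂.2.2
  · rw [bary_rotate C A B] at hA₃
    rw [pencilConic_rotate C A B]
    exact mvEval_pencilConic_arcMidpoint (by rwa [← doubleArea_rotate]) hc ha hb ha₀ hb₀
      hO.2.symm (hO.2.symm.trans hO.1) (hA₃.1.trans hO.2) hA₃.2.1 hA₃.2.2
end

section
/- Let A, B, C be a nondegenerate triangle in the Euclidean plane with side lengths a = dist B C, b = dist C A, c = dist A B, incenter I (barycentric weights (a, b, c)), and excenters I₁, I₂, I₃ (barycentric weights (−a, b, c), (a, −b, c), (a, b, −c)). Then the orthocenter of the excentral triangle I₁I₂I₃ equals the incenter I of triangle ABC. -/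
open EuclideanGeometry RealInnerProductSpace

/-! Seen from the vertex `A`, the barycentric combination with weights `(u, v, w)` is a multiple of
`v • (B - A) + w • (C - A)`. Hence `I` and `I₁` lie on the line through `A` directed by
`b • (B - A) + c • (C - A)`, the internal bisector, while `I₂` and `I₃` lie on the one directed by
`b • (B - A) - c • (C - A)`, the external bisector. These are the sum and the difference of two
vectors of the same length `b * c`, so they are orthogonal and `A` is the foot of the altitude from
`I₁`. The other two altitudes follow by rotating the vertices. -/

section CenterMass

variable {k V : Type*} [Field k] [AddCommGroup V] [Module k V] {u v w : k}

theorem centerMass_three_rotate (A B C : V) :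
    Finset.univ.centerMass ![v, w, u] ![B, C, A] =
      Finset.univ.centerMass ![u, v, w] ![A, B, C] := by
  have weights : v + w + u = u + v + w := by ring
  have vectors : v • B + w • C + u • A = u • A + v • B + w • C := by abel
  simp [Finset.centerMass, Fin.sum_univ_three, weights, vectors]

theorem centerMass_three_sub_left (A B C : V) (h : u + v + w ≠ 0) :
    Finset.univ.centerMass ![u, v, w] ![A, B, C] - A =
      (u + v + w)⁻¹ • (v • (B - A) + w • (C - A)) := by
  rw [eq_inv_smul_iff₀ h, smul_sub]
  simp only [Finset.centerMass, Fin.sum_univ_three, Matrix.cons_val, smul_inv_smul₀ h]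
  module

theorem centerMass_three_sub_centerMass_neg_left (A B C : V)
    (h : u + v + w ≠ 0) (hu : -u + v + w ≠ 0) :
    Finset.univ.centerMass ![u, v, w] ![A, B, C] - Finset.univ.centerMass ![-u, v, w] ![A, B, C] =
      ((u + v + w)⁻¹ - (-u + v + w)⁻¹) • (v • (B - A) + w • (C - A)) := by
  rw [← sub_sub_sub_cancel_right _ _ A, centerMass_three_sub_left A B C h,
    centerMass_three_sub_left A B C hu, sub_smul]

theorem centerMass_three_neg_right_sub_centerMass_neg_middle (A B C : V)
    (hv : u + -v + w ≠ 0) (hw : u + v + -w ≠ 0) :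
    Finset.univ.centerMass ![u, v, -w] ![A, B, C] - Finset.univ.centerMass ![u, -v, w] ![A, B, C] =
      ((u + v + -w)⁻¹ + (u + -v + w)⁻¹) • (v • (B - A) - w • (C - A)) := by
  rw [← sub_sub_sub_cancel_right _ _ A, centerMass_three_sub_left A B C hw,
    centerMass_three_sub_left A B C hv]
  module

end CenterMass

theorem dist_lt_dist_add_dist_of_affineIndependent {V P : Type*} [NormedAddCommGroup V]
    [NormedSpace ℝ V] [StrictConvexSpace ℝ V] [MetricSpace P] [NormedAddTorsor V P] {A B C : P}
    (h : AffineIndependent ℝ ![A, B, C]) : dist A C < dist A B + dist B C :=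
  dist_lt_dist_add_dist_iff.2 fun hB ↦ affineIndependent_iff_not_collinear_set.1 h hB.collinear

section InnerProductSpace

variable {V : Type*} [NormedAddCommGroup V] [InnerProductSpace ℝ V]

theorem inner_norm_smul_add_norm_smul_sub (x y : V) :
    ⟪‖y‖ • x + ‖x‖ • y, ‖y‖ • x - ‖x‖ • y⟫ = 0 := by
  rw [real_inner_add_sub_eq_zero_iff, norm_smul, norm_smul, norm_norm, norm_norm, mul_comm]

theorem inner_incenter_sub_excenter_excenter_sub_excenter {A B C : V} {a b c : ℝ}
    (hABC : AffineIndependent ℝ ![A, B, C])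
    (ha : a = dist B C) (hb : b = dist C A) (hc : c = dist A B) :
    ⟪Finset.univ.centerMass ![a, b, c] ![A, B, C] - Finset.univ.centerMass ![-a, b, c] ![A, B, C],
      Finset.univ.centerMass ![a, b, -c] ![A, B, C] -
        Finset.univ.centerMass ![a, -b, c] ![A, B, C]⟫ = 0 := by
  have hBCA : AffineIndependent ℝ ![B, C, A] := hABC.comm_left.comm_right
  have hb_lt : b < c + a := by
    simpa only [ha, hb, hc, dist_comm C A] using dist_lt_dist_add_dist_of_affineIndependent hABC
  have hc_lt : c < a + b := by
    simpa only [ha, hb, hc, dist_comm A B] using dist_lt_dist_add_dist_of_affineIndependent hBCA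
  have ha_lt : a < b + c := by
    simpa only [ha, hb, hc, dist_comm B C] using
      dist_lt_dist_add_dist_of_affineIndependent hBCA.comm_left.comm_right
  rw [centerMass_three_sub_centerMass_neg_left A B C (by linarith) (by linarith),
    centerMass_three_neg_right_sub_centerMass_neg_middle A B C (by linarith) (by linarith),
    real_inner_smul_left, real_inner_smul_right, hb, hc, dist_eq_norm, dist_comm A, dist_eq_norm,
    inner_norm_smul_add_norm_smul_sub, mul_zero, mul_zero]

theorem stmt9_general (A B C : V) (hABC : AffineIndependent ℝ ![A, B, C])
    (a b c : ℝ) (ha : a = dist B C) (hb : b = dist C A) (hc : c = dist A B)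
    (I I₁ I₂ I₃ : V)
    (hI : I = Finset.univ.centerMass ![a, b, c] ![A, B, C])
    (hI₁ : I₁ = Finset.univ.centerMass ![-a, b, c] ![A, B, C])
    (hI₂ : I₂ = Finset.univ.centerMass ![a, -b, c] ![A, B, C])
    (hI₃ : I₃ = Finset.univ.centerMass ![a, b, -c] ![A, B, C]) :
    ⟪I - I₁, I₃ - I₂⟫ = 0 ∧ ⟪I - I₂, I₁ - I₃⟫ = 0 ∧ ⟪I - I₃, I₂ - I₁⟫ = 0 := by
  have hBCA : AffineIndependent ℝ ![B, C, A] := hABC.comm_left.comm_right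
  have hCAB : AffineIndependent ℝ ![C, A, B] := hBCA.comm_left.comm_right
  rw [hI, hI₁, hI₂, hI₃]
  refine ⟨inner_incenter_sub_excenter_excenter_sub_excenter hABC ha hb hc, ?_, ?_⟩
  · simpa only [centerMass_three_rotate A B C] using
      inner_incenter_sub_excenter_excenter_sub_excenter hBCA hb hc ha
  · simpa only [centerMass_three_rotate B C A, centerMass_three_rotate A B C] using
      inner_incenter_sub_excenter_excenter_sub_excenter hCAB hc ha hb

end InnerProductSpace

theorem bary_eq_centerMass (P Q R : EuclideanSpace ℝ (Fin 2)) (u v w : ℝ) :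
    bary P Q R u v w = Finset.univ.centerMass ![u, v, w] ![P, Q, R] := by
  simp only [bary, Finset.centerMass, Fin.sum_univ_three, Matrix.cons_val]
  module

theorem stmt9 (A B C : EuclideanSpace ℝ (Fin 2))
    (hABC : AffineIndependent ℝ ![A, B, C])
    (a b c : ℝ) (ha : a = dist B C) (hb : b = dist C A) (hc : c = dist A B)
    (I I₁ I₂ I₃ : EuclideanSpace ℝ (Fin 2))
    (hI : I = bary A B C a b c)
    (hI₁ : I₁ = bary A B C (-a) b c)
    (hI₂ : I₂ = bary A B C a (-b) c)
    (hI₃ : I₃ = bary A B C a b (-c)) :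
    ⟪I - I₁, I₃ - I₂⟫ = 0 ∧ ⟪I - I₂, I₁ - I₃⟫ = 0 ∧ ⟪I - I₃, I₂ - I₁⟫ = 0 := by
  simp only [bary_eq_centerMass] at hI hI₁ hI₂ hI₃
  exact stmt9_general A B C hABC a b c ha hb hc I I₁ I₂ I₃ hI hI₁ hI₂ hI₃
end

section
/- Let A, B, C be a nondegenerate triangle in the Euclidean plane with side lengths a = dist B C, b = dist C A, c = dist A B, circumcenter O, and excenters I₁, I₂, I₃ (barycentric weights (−a, b, c), (a, −b, c), (a, b, −c)). Then the nine-point center of the excentral triangle I₁I₂I₃ — the midpoint of the circumcenter and the orthocenter of I₁I₂I₃ — equals the circumcenter O of triangle ABC. -/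
open EuclideanGeometry RealInnerProductSpace

/-! The vertex `A` lies between the excenters opposite to `B` and `C`, on the external bisector of
the angle at `A`, while the excenter opposite to `A` lies on the internal one. The two bisectors are
perpendicular, so `A`, `B`, `C` are the feet of the altitudes of the excentral triangle. Its
nine-point circle passes through these feet and is therefore the circumcircle of `ABC`. -/

/-- The barycentric combination of three points of an arbitrary vector space, used to speak about
excenters outside the plane. It is written exactly as `bary`, so that the two agree by definition;
in particular it is junk when `u + v + w = 0`. -/
def barycentricCombination {k V : Type*} [Field k] [AddCommGroup V] [Module k V]
    (P Q R : V) (u v w : k) : V :=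
  (u / (u + v + w)) • P + (v / (u + v + w)) • Q + (w / (u + v + w)) • R

section BarycentricCombination

variable {k V : Type*} [Field k] [AddCommGroup V] [Module k V]

theorem barycentricCombination_rotate (P Q R : V) (u v w : k) :
    barycentricCombination Q R P v w u = barycentricCombination P Q R u v w := by
  have hsum : v + w + u = u + v + w := by ring
  simp only [barycentricCombination, hsum]
  abel

theorem barycentricCombination_sub (P Q R X : V) {u v w : k} (h : u + v + w ≠ 0) :
    barycentricCombination P Q R u v w - X =
      (u + v + w)⁻¹ • (u • (P - X) + v • (Q - X) + w • (R - X)) := by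
  unfold barycentricCombination
  match_scalars <;> field_simp
  ring

theorem barycentricCombination_mem {S : AffineSubspace k V} {P Q R : V} (hP : P ∈ S) (hQ : Q ∈ S)
    (hR : R ∈ S) {u v w : k} (h : u + v + w ≠ 0) : barycentricCombination P Q R u v w ∈ S := by
  have hdir : barycentricCombination P Q R u v w - P ∈ S.direction := by
    rw [barycentricCombination_sub P Q R P h]
    exact S.direction.smul_mem _ <| add_mem (add_mem
      (S.direction.smul_mem u (S.vsub_mem_direction hP hP))
      (S.direction.smul_mem v (S.vsub_mem_direction hQ hP)))
      (S.direction.smul_mem w (S.vsub_mem_direction hR hP))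
  simpa using AffineSubspace.vadd_mem_of_mem_direction hdir hP

end BarycentricCombination

section AffineIndependent

variable {k V P ι : Type*} [DivisionRing k] [AddCommGroup V] [Module k V] [AddTorsor V P]

theorem affineIndependent_of_affineSpan_le [Finite ι] {p q : ι → P} (hp : AffineIndependent k p)
    (h : affineSpan k (Set.range p) ≤ affineSpan k (Set.range q)) : AffineIndependent k q := by
  have := Fintype.ofFinite ι
  rcases isEmpty_or_nonempty ι with _ | _
  · exact affineIndependent_of_subsingleton k q
  have hcard : Fintype.card ι = Fintype.card ι - 1 + 1 :=
    (Nat.sub_add_cancel Fintype.card_pos).symm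
  have := finiteDimensional_vectorSpan_range k q
  have hdir : vectorSpan k (Set.range p) ≤ vectorSpan k (Set.range q) := by
    simpa only [direction_affineSpan] using AffineSubspace.direction_le h
  rw [affineIndependent_iff_le_finrank_vectorSpan k q hcard]
  exact ((affineIndependent_iff_le_finrank_vectorSpan k p hcard).1 hp).trans
    (Submodule.finrank_mono hdir)

theorem affineIndependent_rotate {p : Fin 3 → P} (hp : AffineIndependent k p) (i : Fin 3) :
    AffineIndependent k ![p i, p (i + 1), p (i + 2)] := by
  convert hp.comp_embedding (Equiv.addLeft i).toEmbedding using 1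
  ext j
  fin_cases j <;> simp

end AffineIndependent

section ExcentralPoints

variable {V : Type*} [NormedAddCommGroup V] [NormedSpace ℝ V]

/-- The excenter of the triangle `A B C` opposite to `A`, given by its barycentric weights. -/
noncomputable def oppositeExcenter (A B C : V) : V :=
  barycentricCombination A B C (-dist B C) (dist C A) (dist A B)

/-- The vertices of the excentral triangle: the `i`-th one is the excenter opposite to the `i`-th
vertex. Indices are cyclic, so that the three vertices are treated alike. -/
noncomputable def excentralPoints (t : Affine.Triangle ℝ V) (i : Fin 3) : V :=
  oppositeExcenter (t.points i) (t.points (i + 1)) (t.points (i + 2))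

theorem excentralPoints_add_one (t : Affine.Triangle ℝ V) (i : Fin 3) :
    excentralPoints t (i + 1) =
      oppositeExcenter (t.points (i + 1)) (t.points (i + 2)) (t.points i) := by
  fin_cases i <;> rfl

theorem excentralPoints_add_two (t : Affine.Triangle ℝ V) (i : Fin 3) :
    excentralPoints t (i + 2) =
      oppositeExcenter (t.points (i + 2)) (t.points i) (t.points (i + 1)) := by
  fin_cases i <;> rfl

theorem excentralPoints_eq_vecCons {A B C : V} (h : AffineIndependent ℝ ![A, B, C]) :
    excentralPoints ⟨![A, B, C], h⟩ =
      ![barycentricCombination A B C (-dist B C) (dist C A) (dist A B),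
        barycentricCombination A B C (dist B C) (-dist C A) (dist A B),
        barycentricCombination A B C (dist B C) (dist C A) (-dist A B)] := by
  ext i
  fin_cases i
  · rfl
  · exact barycentricCombination_rotate A B C _ _ _
  · exact (barycentricCombination_rotate B C A _ _ _).trans
      (barycentricCombination_rotate A B C _ _ _)

end ExcentralPoints

section StrictConvexSpace

variable {V : Type*} [NormedAddCommGroup V] [NormedSpace ℝ V] [StrictConvexSpace ℝ V]

theorem neg_dist_add_dist_add_dist_pos {P : Type*} [MetricSpace P] [NormedAddTorsor V P]
    {A B C : P} (h : AffineIndependent ℝ ![A, B, C]) :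
    0 < -dist B C + dist C A + dist A B := by
  have hstrict : dist B C < dist B A + dist A C := by
    rw [dist_lt_dist_add_dist_iff]
    intro hbtw
    refine affineIndependent_iff_not_collinear_set.1 h ?_
    simpa only [Set.insert_comm] using hbtw.collinear
  rw [dist_comm B A, dist_comm A C] at hstrict
  linarith

section Vertices

variable {A B C : V} (h : AffineIndependent ℝ ![A, B, C])
include h

theorem oppositeExcenter_mem {S : AffineSubspace ℝ V} (hA : A ∈ S) (hB : B ∈ S) (hC : C ∈ S) :
    oppositeExcenter A B C ∈ S :=
  barycentricCombination_mem hA hB hC (neg_dist_add_dist_add_dist_pos h).ne'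

theorem oppositeExcenter_sub (X : V) :
    oppositeExcenter A B C - X = (-dist B C + dist C A + dist A B)⁻¹ •
      (-dist B C • (A - X) + dist C A • (B - X) + dist A B • (C - X)) :=
  barycentricCombination_sub A B C X (neg_dist_add_dist_add_dist_pos h).ne'

theorem oppositeExcenter_sub_vertex :
    oppositeExcenter A B C - A = (-dist B C + dist C A + dist A B)⁻¹ •
      (dist C A • (B - A) + dist A B • (C - A)) := by
  rw [oppositeExcenter_sub h, sub_self, smul_zero, zero_add]

theorem exists_pos_sub_oppositeExcenter_eq_smul_sub : ∃ r : ℝ, 0 < r ∧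
    A - oppositeExcenter B C A = r • (dist C A • (B - A) - dist A B • (C - A)) := by
  have hBCA := h.comm_left.comm_right
  refine ⟨_, inv_pos.2 (neg_dist_add_dist_add_dist_pos hBCA), ?_⟩
  rw [← neg_sub, oppositeExcenter_sub hBCA]
  module

theorem exists_pos_oppositeExcenter_sub_eq_smul_sub : ∃ r : ℝ, 0 < r ∧
    oppositeExcenter C A B - A = r • (dist C A • (B - A) - dist A B • (C - A)) := by
  have hCAB := h.comm_right.comm_left
  refine ⟨_, inv_pos.2 (neg_dist_add_dist_add_dist_pos hCAB), ?_⟩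
  rw [oppositeExcenter_sub hCAB]
  module

theorem wbtw_oppositeExcenter_vertex_oppositeExcenter :
    Wbtw ℝ (oppositeExcenter B C A) A (oppositeExcenter C A B) := by
  obtain ⟨r, hr, hB⟩ := exists_pos_sub_oppositeExcenter_eq_smul_sub h
  obtain ⟨s, hs, hC⟩ := exists_pos_oppositeExcenter_sub_eq_smul_sub h
  rw [wbtw_iff_sameRay_vsub, vsub_eq_sub, vsub_eq_sub, hB, hC]
  exact (SameRay.sameRay_pos_smul_left _ hr).pos_smul_right hs

end Vertices

theorem point_mem_line_excentralPoints (t : Affine.Triangle ℝ V) (i : Fin 3) :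
    t.points i ∈ line[ℝ, excentralPoints t (i + 1), excentralPoints t (i + 2)] := by
  rw [excentralPoints_add_one, excentralPoints_add_two]
  exact (wbtw_oppositeExcenter_vertex_oppositeExcenter
    (affineIndependent_rotate t.independent i)).mem_affineSpan

theorem affineSpan_range_excentralPoints (t : Affine.Triangle ℝ V) :
    affineSpan ℝ (Set.range (excentralPoints t)) = affineSpan ℝ (Set.range t.points) := by
  apply le_antisymm <;> rw [affineSpan_le, Set.range_subset_iff] <;> intro i
  · have hmem := fun j ↦ mem_affineSpan ℝ (Set.mem_range_self (f := t.points) j)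
    exact oppositeExcenter_mem (affineIndependent_rotate t.independent i) (hmem i) (hmem _) (hmem _)
  · have hmem := fun j ↦ mem_affineSpan ℝ (Set.mem_range_self (f := excentralPoints t) j)
    exact affineSpan_pair_le_of_mem_of_mem (hmem _) (hmem _) (point_mem_line_excentralPoints t i)

/-- The triangle formed by the three excenters. -/
noncomputable def excentralTriangle (t : Affine.Triangle ℝ V) : Affine.Triangle ℝ V where
  points := excentralPoints t
  independent := affineIndependent_of_affineSpan_le t.independent
    (affineSpan_range_excentralPoints t).ge

end StrictConvexSpace

section TriangleCenters

variable {V P : Type*} [NormedAddCommGroup V] [InnerProductSpace ℝ V] [MetricSpace P]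
  [NormedAddTorsor V P]

theorem eq_circumcenter_of_dist_eq_of_dist_eq (t : Affine.Triangle ℝ P) {X : P}
    (hX : X ∈ affineSpan ℝ (Set.range t.points))
    (h₁ : dist X (t.points 0) = dist X (t.points 1))
    (h₂ : dist X (t.points 0) = dist X (t.points 2)) : X = t.circumcenter := by
  refine t.eq_circumcenter_of_dist_eq hX (r := dist X (t.points 0)) fun i ↦ ?_
  rw [dist_comm]
  fin_cases i
  exacts [rfl, h₁.symm, h₂.symm]

theorem altitudeFoot_eq_of_mem_line_of_inner_eq_zero (t : Affine.Triangle ℝ P) (i : Fin 3) {D : P}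
    (hD : D ∈ line[ℝ, t.points (i + 1), t.points (i + 2)])
    (hperp : ⟪t.points i -ᵥ D, t.points (i + 1) -ᵥ t.points (i + 2)⟫ = 0) :
    t.altitudeFoot i = D := by
  have hcompl : ({i}ᶜ : Set (Fin 3)) = {i + 1, i + 2} := by
    ext j
    fin_cases i <;> fin_cases j <;> simp
  have hface : Set.range (t.faceOpposite i).points = {t.points (i + 1), t.points (i + 2)} := by
    rw [Affine.Simplex.range_faceOpposite_points, hcompl, Set.image_pair]
  rw [Affine.Simplex.altitudeFoot, Affine.Simplex.orthogonalProjectionSpan,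
    coe_orthogonalProjection_eq_iff_mem, hface, direction_affineSpan]
  refine ⟨hD, (Submodule.mem_orthogonal' _ _).2 fun v hv ↦ ?_⟩
  obtain ⟨r, rfl⟩ := mem_vectorSpan_pair.1 hv
  rw [inner_smul_right, hperp, mul_zero]

theorem ninePointCircle_center_eq_midpoint (t : Affine.Triangle ℝ P) :
    t.ninePointCircle.center = midpoint ℝ t.circumcenter t.orthocenter := by
  rw [Affine.Simplex.ninePointCircle_center,
    Affine.Triangle.orthocenter_eq_smul_vsub_vadd_circumcenter, midpoint, AffineMap.lineMap_apply,
    vadd_vsub, smul_smul, Affine.Simplex.centroid]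
  norm_num

theorem orthocenter_eq_sum_sub_two_smul_circumcenter {V : Type*} [NormedAddCommGroup V]
    [InnerProductSpace ℝ V] (t : Affine.Triangle ℝ V) :
    t.orthocenter = t.points 0 + t.points 1 + t.points 2 - (2 : ℝ) • t.circumcenter := by
  have hsylvester := t.orthocenter_vsub_circumcenter_eq_sum_vsub
  simp only [vsub_eq_sub, sub_eq_iff_eq_add] at hsylvester
  rw [hsylvester, Fin.sum_univ_three]
  module

end TriangleCenters

section ExcentralTriangle

variable {V : Type*} [NormedAddCommGroup V] [InnerProductSpace ℝ V]

section Vertices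

variable {A B C : V} (h : AffineIndependent ℝ ![A, B, C])
include h

theorem inner_oppositeExcenter_sub_vertex_eq_zero :
    ⟪oppositeExcenter A B C - A, oppositeExcenter B C A - oppositeExcenter C A B⟫ = 0 := by
  obtain ⟨r, -, hB⟩ := exists_pos_sub_oppositeExcenter_eq_smul_sub h
  obtain ⟨s, -, hC⟩ := exists_pos_oppositeExcenter_sub_eq_smul_sub h
  have hside : oppositeExcenter B C A - oppositeExcenter C A B =
      (-(r + s)) • (dist C A • (B - A) - dist A B • (C - A)) := by
    rw [← sub_sub_sub_cancel_right _ _ A, hC, ← neg_sub A, hB]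
    module
  have hbisectors : ⟪dist C A • (B - A) + dist A B • (C - A),
      dist C A • (B - A) - dist A B • (C - A)⟫ = 0 := by
    rw [real_inner_add_sub_eq_zero_iff, norm_smul, norm_smul, ← dist_eq_norm, ← dist_eq_norm,
      Real.norm_of_nonneg dist_nonneg, Real.norm_of_nonneg dist_nonneg, dist_comm B A, mul_comm]
  rw [oppositeExcenter_sub_vertex h, hside, inner_smul_left, inner_smul_right, hbisectors,
    mul_zero, mul_zero]

end Vertices

theorem altitudeFoot_excentralTriangle (t : Affine.Triangle ℝ V) (i : Fin 3) :
    (excentralTriangle t).altitudeFoot i = t.points i := by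
  refine altitudeFoot_eq_of_mem_line_of_inner_eq_zero _ i (point_mem_line_excentralPoints t i) ?_
  change ⟪excentralPoints t i - t.points i,
    excentralPoints t (i + 1) - excentralPoints t (i + 2)⟫ = 0
  rw [excentralPoints_add_one, excentralPoints_add_two]
  exact inner_oppositeExcenter_sub_vertex_eq_zero (affineIndependent_rotate t.independent i)

theorem ninePointCircle_center_excentralTriangle (t : Affine.Triangle ℝ V) :
    (excentralTriangle t).ninePointCircle.center = t.circumcenter := by
  refine t.eq_circumcenter_of_dist_eq (r := (excentralTriangle t).ninePointCircle.radius) ?_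
    fun i ↦ ?_
  · exact affineSpan_range_excentralPoints t ▸
      (excentralTriangle t).ninePointCircle_center_mem_affineSpan
  · rw [← altitudeFoot_excentralTriangle]
    exact Affine.Triangle.altitudeFoot_mem_ninePointCircle _ i

end ExcentralTriangle

theorem stmt10_general {V : Type*} [NormedAddCommGroup V] [InnerProductSpace ℝ V]
    (A B C O O' : V) (hABC : AffineIndependent ℝ ![A, B, C])
    (a b c : ℝ) (ha : a = dist B C) (hb : b = dist C A) (hc : c = dist A B)
    (I₁ I₂ I₃ H' : V)
    (hI₁ : I₁ = barycentricCombination A B C (-a) b c)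
    (hI₂ : I₂ = barycentricCombination A B C a (-b) c)
    (hI₃ : I₃ = barycentricCombination A B C a b (-c))
    (hO_mem : O ∈ affineSpan ℝ (Set.range ![A, B, C]))
    (hO : dist O A = dist O B ∧ dist O A = dist O C)
    (hO'_mem : O' ∈ affineSpan ℝ (Set.range ![A, B, C]))
    (hO' : dist O' I₁ = dist O' I₂ ∧ dist O' I₁ = dist O' I₃)
    (hH' : H' = I₁ + I₂ + I₃ - (2 : ℝ) • O') :
    midpoint ℝ O' H' = O := by
  subst ha hb hc
  let t : Affine.Triangle ℝ V := ⟨![A, B, C], hABC⟩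
  have hpoints : (excentralTriangle t).points = ![I₁, I₂, I₃] := by
    rw [hI₁, hI₂, hI₃]
    exact excentralPoints_eq_vecCons hABC
  have hO_eq : O = t.circumcenter :=
    eq_circumcenter_of_dist_eq_of_dist_eq t hO_mem hO.1 hO.2
  have hO'_eq : O' = (excentralTriangle t).circumcenter := by
    refine eq_circumcenter_of_dist_eq_of_dist_eq _ ?_ ?_ ?_
    · exact affineSpan_range_excentralPoints t ▸ hO'_mem
    · simpa [hpoints] using hO'.1
    · simpa [hpoints] using hO'.2
  have hH'_eq : H' = (excentralTriangle t).orthocenter := by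
    rw [orthocenter_eq_sum_sub_two_smul_circumcenter, hpoints, hH', hO'_eq]
    rfl
  rw [hO'_eq, hH'_eq, ← ninePointCircle_center_eq_midpoint,
    ninePointCircle_center_excentralTriangle, hO_eq]

theorem stmt10 (A B C O O' : EuclideanSpace ℝ (Fin 2))
    (hABC : AffineIndependent ℝ ![A, B, C])
    (a b c : ℝ) (ha : a = dist B C) (hb : b = dist C A) (hc : c = dist A B)
    (I₁ I₂ I₃ H' : EuclideanSpace ℝ (Fin 2))
    (hI₁ : I₁ = bary A B C (-a) b c)
    (hI₂ : I₂ = bary A B C a (-b) c)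
    (hI₃ : I₃ = bary A B C a b (-c))
    (hO : dist O A = dist O B ∧ dist O A = dist O C)
    (hO' : dist O' I₁ = dist O' I₂ ∧ dist O' I₁ = dist O' I₃)
    (hH' : H' = I₁ + I₂ + I₃ - (2 : ℝ) • O') :
    midpoint ℝ O' H' = O := by
  have htop : affineSpan ℝ (Set.range ![A, B, C]) = ⊤ :=
    hABC.affineSpan_eq_top_iff_card_eq_finrank_add_one.2 (by simp)
  exact stmt10_general A B C O O' hABC a b c ha hb hc I₁ I₂ I₃ H' hI₁ hI₂ hI₃
    (htop ▸ AffineSubspace.mem_top ..) hO (htop ▸ AffineSubspace.mem_top ..) hO' hH'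
end

section
/- Let A, B, C be a nondegenerate triangle in the Euclidean plane with circumcenter O and orthocenter H, and let M₁ = midpoint(B,C), M₂ = midpoint(C,A), M₃ = midpoint(A,B) be the vertices of the medial triangle. Then the circumcenter of the medial triangle M₁M₂M₃ equals midpoint(O, H), the nine-point center of triangle ABC. -/
open EuclideanGeometry RealInnerProductSpace

/-!
The nine-point center `N = midpoint O H` satisfies `2 N = A + B + C - O`, and `2 M₁ = B + C`, so
`N - M₁ = (A - O) / 2`. Hence `N` lies at half the circumradius from every vertex of the medial
triangle.
-/

theorem midpoint_sub_midpoint_eq_invOf_two_smul_sub {R V : Type*} [Ring R] [Invertible (2 : R)]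
    [AddCommGroup V] [Module R V] {A B C O H : V} (hH : H = A + B + C - (2 : R) • O) :
    midpoint R O H - midpoint R B C = (⅟2 : R) • (A - O) := by
  rw [← vsub_eq_sub, midpoint_vsub_midpoint, midpoint_eq_smul_add, hH, two_smul]
  simp only [vsub_eq_sub]
  congr 1
  abel

section NormedSpace

variable {𝕜 V : Type*} [NormedField 𝕜] [Invertible (2 : 𝕜)] [SeminormedAddCommGroup V]
  [NormedSpace 𝕜 V]

theorem dist_midpoint_midpoint_eq_norm_invOf_two_mul_dist {A B C O H : V}
    (hH : H = A + B + C - (2 : 𝕜) • O) :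
    dist (midpoint 𝕜 O H) (midpoint 𝕜 B C) = ‖(⅟2 : 𝕜)‖ * dist O A := by
  rw [dist_eq_norm, midpoint_sub_midpoint_eq_invOf_two_smul_sub hH, norm_smul, dist_eq_norm_sub']

theorem stmt14_general (A B C O H : V)
    (hO : dist O A = dist O B ∧ dist O A = dist O C)
    (hH : H = A + B + C - (2 : 𝕜) • O)
    (M₁ M₂ M₃ : V)
    (hM₁ : M₁ = midpoint 𝕜 B C) (hM₂ : M₂ = midpoint 𝕜 C A)
    (hM₃ : M₃ = midpoint 𝕜 A B) :
    dist (midpoint 𝕜 O H) M₁ = dist (midpoint 𝕜 O H) M₂ ∧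
      dist (midpoint 𝕜 O H) M₁ = dist (midpoint 𝕜 O H) M₃ := by
  have hH_BCA : H = B + C + A - (2 : 𝕜) • O := by rw [hH, add_rotate]
  have hH_CAB : H = C + A + B - (2 : 𝕜) • O := by rw [hH_BCA, add_rotate]
  have h₁ : dist (midpoint 𝕜 O H) M₁ = ‖(⅟2 : 𝕜)‖ * dist O A :=
    hM₁ ▸ dist_midpoint_midpoint_eq_norm_invOf_two_mul_dist hH
  have h₂ : dist (midpoint 𝕜 O H) M₂ = ‖(⅟2 : 𝕜)‖ * dist O B :=
    hM₂ ▸ dist_midpoint_midpoint_eq_norm_invOf_two_mul_dist hH_BCA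
  have h₃ : dist (midpoint 𝕜 O H) M₃ = ‖(⅟2 : 𝕜)‖ * dist O C :=
    hM₃ ▸ dist_midpoint_midpoint_eq_norm_invOf_two_mul_dist hH_CAB
  exact ⟨by rw [h₁, h₂, hO.1], by rw [h₁, h₃, hO.2]⟩

end NormedSpace

theorem stmt14 (A B C O H : EuclideanSpace ℝ (Fin 2))
    (hABC : AffineIndependent ℝ ![A, B, C])
    (hO : dist O A = dist O B ∧ dist O A = dist O C)
    (hH : H = A + B + C - (2 : ℝ) • O)
    (M₁ M₂ M₃ : EuclideanSpace ℝ (Fin 2))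
    (hM₁ : M₁ = midpoint ℝ B C) (hM₂ : M₂ = midpoint ℝ C A)
    (hM₃ : M₃ = midpoint ℝ A B) :
    dist (midpoint ℝ O H) M₁ = dist (midpoint ℝ O H) M₂ ∧
      dist (midpoint ℝ O H) M₁ = dist (midpoint ℝ O H) M₃ :=
  stmt14_general A B C O H hO hH M₁ M₂ M₃ hM₁ hM₂ hM₃
end

section
/- Let A, B, C be a nondegenerate triangle in the Euclidean plane with side lengths a = dist B C, b = dist C A, c = dist A B, incenter I (barycentric weights (a, b, c)), and circumcenter O. Let A₁, A₂, A₃ be the arc midpoints: A₁ is the point of the circumcircle of ABC distinct from A and collinear with A and I, and similarly A₂ for B and A₃ for C. Then the orthocenter of the mid-arc triangle A₁A₂A₃ equals the incenter I of triangle ABC. -/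
open EuclideanGeometry RealInnerProductSpace

/-!
Project onto the side `AB`, writing `a`, `b`, `c` for the side lengths. Since `AA₁` is a chord along
the bisector of the angle `A`, its projection has length `(b + c) / 2`; likewise that of `BA₂` has
length `(c + a) / 2`. Both `O` and `A₃` are equidistant from `A` and `B`, hence project to the
midpoint of `AB`, and the incircle touches `AB` at distance `(b + c - a) / 2` from `A`. Adding up,
`(A₁ - O) + (A₂ - O) + (A₃ - O) - (I - O)` is orthogonal to `AB`. By symmetry it is orthogonal to
all sides; as it lies in the plane of the triangle, it vanishes.
-/

section Affine

variable {k V P : Type*} [AddCommGroup V] [AddTorsor V P] {A B C : P}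

lemma left_ne_right_of_affineIndependent [Ring k] [Nontrivial k] [Module k V]
    (hABC : AffineIndependent k ![A, B, C]) : A ≠ C :=
  hABC.injective.ne (show (0 : Fin 3) ≠ 2 by decide)

lemma affineSpan_triangle_eq_top [DivisionRing k] [Module k V]
    (hV : Module.finrank k V = 2) (hABC : AffineIndependent k ![A, B, C]) :
    affineSpan k {A, B, C} = ⊤ := by
  have : FiniteDimensional k V := FiniteDimensional.of_finrank_eq_succ hV
  have span_range : affineSpan k (Set.range ![A, B, C]) = ⊤ :=
    hABC.affineSpan_eq_top_iff_card_eq_finrank_add_one.mpr (by simp [hV])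
  rwa [Matrix.range_cons, Matrix.range_cons_cons_empty, ← Set.insert_eq] at span_range

end Affine

section Bisector

variable {V : Type*} [NormedAddCommGroup V] [InnerProductSpace ℝ V]

lemma inner_norm_smul_add_norm_smul_left (u v : V) :
    ⟪‖v‖ • u + ‖u‖ • v, u⟫ = ‖u‖ * (‖u‖ * ‖v‖ + ⟪u, v⟫) := by
  rw [inner_add_left, real_inner_smul_left, real_inner_smul_left, real_inner_self_eq_norm_sq,
    real_inner_comm]
  ring

lemma norm_norm_smul_add_norm_smul_sq (u v : V) :
    ‖‖v‖ • u + ‖u‖ • v‖ ^ 2 = 2 * ‖v‖ * ⟪‖v‖ • u + ‖u‖ • v, u⟫ := by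
  have inner_v : ⟪‖v‖ • u + ‖u‖ • v, v⟫ = ‖v‖ * (‖v‖ * ‖u‖ + ⟪v, u⟫) := by
    rw [add_comm, inner_norm_smul_add_norm_smul_left]
  rw [← real_inner_self_eq_norm_sq, inner_add_right, real_inner_smul_right, real_inner_smul_right,
    inner_v, inner_norm_smul_add_norm_smul_left, real_inner_comm]
  ring

-- `⟪o, u⟫ = ‖u‖ ^ 2 / 2` says that `u` lies on the sphere with center `o` through `0`.
lemma inner_chord_of_eq_smul_bisector {o u v x : V} {t : ℝ} (hx : x ≠ 0)
    (hxt : x = t • (‖v‖ • u + ‖u‖ • v)) (hou : ⟪o, u⟫ = ‖u‖ ^ 2 / 2)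
    (hov : ⟪o, v⟫ = ‖v‖ ^ 2 / 2) (hox : ⟪o, x⟫ = ‖x‖ ^ 2 / 2) :
    ⟪x, u⟫ = ‖u‖ * (‖u‖ + ‖v‖) / 2 := by
  have ht : t ≠ 0 := by
    rintro rfl
    exact hx (by rw [hxt, zero_smul])
  have hv : v ≠ 0 := by
    rintro rfl
    exact hx (by rw [hxt, norm_zero, zero_smul, smul_zero, add_zero, smul_zero])
  have how : ⟪o, ‖v‖ • u + ‖u‖ • v⟫ = ‖u‖ * ‖v‖ * (‖u‖ + ‖v‖) / 2 := by
    rw [inner_add_right, real_inner_smul_right, real_inner_smul_right, hou, hov]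
    ring
  have hxu : ⟪x, u⟫ = t * ⟪‖v‖ • u + ‖u‖ • v, u⟫ := by rw [hxt, real_inner_smul_left]
  rw [hxt, real_inner_smul_right, norm_smul, mul_pow, Real.norm_eq_abs, sq_abs,
    norm_norm_smul_add_norm_smul_sq, how] at hox
  refine mul_left_cancel₀ (mul_ne_zero ht (norm_ne_zero_iff.mpr hv)) ?_
  rw [hxu]
  linear_combination -hox

end Bisector

section Triangle

variable {V P : Type*} [NormedAddCommGroup V] [InnerProductSpace ℝ V] [MetricSpace P]
  [NormedAddTorsor V P] {A B C O I A₁ A₂ A₃ Q : P}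

lemma perimeter_pos (B : P) (hAC : A ≠ C) : 0 < dist B C + dist C A + dist A B := by
  have := dist_pos.mpr hAC.symm
  positivity

lemma inner_vsub_vsub_of_dist_eq (hQ : dist Q A = dist Q B) :
    ⟪Q -ᵥ A, B -ᵥ A⟫ = dist A B ^ 2 / 2 :=
  AffineSubspace.mem_perpBisector_iff_inner_eq.mp
    (AffineSubspace.mem_perpBisector_iff_dist_eq.mpr hQ)

/-- `I` is the incenter of the triangle `ABC`, encoded by its barycentric coordinates
`(BC : CA : AB)`. The equation determines `I` unless `A = B = C`. -/
def IsIncenter (A B C I : P) : Prop :=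
  dist B C • (A -ᵥ I) + dist C A • (B -ᵥ I) + dist A B • (C -ᵥ I) = 0

/-- `Q` is the point other than `A` in which the line `AI` meets the circle with center `O`
through `A`. When `O` and `I` are the circumcenter and incenter of a triangle with vertex `A`,
this is the midpoint of the arc opposite `A`. -/
def IsSecondIntersection (O A I Q : P) : Prop :=
  dist O Q = dist O A ∧ Q ≠ A ∧ Collinear ℝ {A, I, Q}

namespace IsIncenter

lemma rotate (hI : IsIncenter A B C I) : IsIncenter B C A I := by
  rw [IsIncenter] at hI ⊢
  rw [← hI]
  abel

lemma swap (hI : IsIncenter A B C I) : IsIncenter B A C I := by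
  rw [IsIncenter, dist_comm A C, dist_comm C B, dist_comm B A, add_comm (dist C A • _)]
  exact hI

lemma smul_vsub_eq_bisector (hI : IsIncenter A B C I) :
    (dist B C + dist C A + dist A B) • (I -ᵥ A) =
      ‖C -ᵥ A‖ • (B -ᵥ A) + ‖B -ᵥ A‖ • (C -ᵥ A) := by
  rw [IsIncenter, ← vsub_sub_vsub_cancel_right B I A, ← vsub_sub_vsub_cancel_right C I A,
    ← neg_vsub_eq_vsub_rev I A] at hI
  rw [← dist_eq_norm_vsub, ← dist_eq_norm_vsub', ← sub_eq_zero, ← neg_eq_zero, ← hI]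
  module

lemma ne_left (hI : IsIncenter A B C I) (hABC : AffineIndependent ℝ ![A, B, C]) : I ≠ A := by
  rintro rfl
  have bisector_zero := hI.smul_vsub_eq_bisector
  rw [vsub_self, smul_zero] at bisector_zero
  have hBIC : Wbtw ℝ B I C := by
    rw [wbtw_iff_sameRay_vsub, sameRay_iff_norm_smul_eq, ← neg_vsub_eq_vsub_rev B I, norm_neg,
      smul_neg, ← sub_eq_zero, bisector_zero]
    module
  rw [affineIndependent_iff_not_collinear_set, Set.insert_comm] at hABC
  exact hABC hBIC.collinear

lemma vsub_eq_smul_bisector (hI : IsIncenter A B C I) (hAC : A ≠ C) :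
    I -ᵥ A = (dist B C + dist C A + dist A B)⁻¹ •
      (‖C -ᵥ A‖ • (B -ᵥ A) + ‖B -ᵥ A‖ • (C -ᵥ A)) := by
  rw [← hI.smul_vsub_eq_bisector, inv_smul_smul₀ (perimeter_pos B hAC).ne']

lemma inner_vsub_vsub (hI : IsIncenter A B C I) (hAC : A ≠ C) :
    ⟪I -ᵥ A, B -ᵥ A⟫ = dist A B * (dist A B + dist C A - dist B C) / 2 := by
  have law_of_cosines := norm_sub_sq_real (B -ᵥ A) (C -ᵥ A)
  rw [vsub_sub_vsub_cancel_right, ← dist_eq_norm_vsub, ← dist_eq_norm_vsub', ← dist_eq_norm_vsub]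
    at law_of_cosines
  rw [hI.vsub_eq_smul_bisector hAC, real_inner_smul_left, inner_norm_smul_add_norm_smul_left,
    ← dist_eq_norm_vsub', ← dist_eq_norm_vsub]
  field_simp [(perimeter_pos B hAC).ne']
  linear_combination dist A B * law_of_cosines

lemma mem_affineSpan_vertices (hI : IsIncenter A B C I) (hAC : A ≠ C) :
    I ∈ affineSpan ℝ {A, B, C} := by
  have hA : A ∈ affineSpan ℝ {A, B, C} := mem_affineSpan ℝ (by simp)
  have hB : B ∈ affineSpan ℝ {A, B, C} := mem_affineSpan ℝ (by simp)
  have hC : C ∈ affineSpan ℝ {A, B, C} := mem_affineSpan ℝ (by simp)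
  rw [← AffineSubspace.vsub_right_mem_direction_iff_mem hA, hI.vsub_eq_smul_bisector hAC]
  exact Submodule.smul_mem _ _ (add_mem
    (Submodule.smul_mem _ _ (AffineSubspace.vsub_mem_direction hB hA))
    (Submodule.smul_mem _ _ (AffineSubspace.vsub_mem_direction hC hA)))

end IsIncenter

namespace IsSecondIntersection

lemma mem_line (hQ : IsSecondIntersection O A I Q) (hIA : I ≠ A) : Q ∈ line[ℝ, A, I] :=
  hQ.2.2.mem_affineSpan_of_mem_of_ne (by simp) (by simp) (by simp) hIA.symm

lemma exists_vsub_eq_smul (hQ : IsSecondIntersection O A I Q) (hIA : I ≠ A) :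
    ∃ t : ℝ, Q -ᵥ A = t • (I -ᵥ A) := by
  obtain ⟨t, rfl⟩ := mem_affineSpan_pair_iff_exists_lineMap_eq.mp (hQ.mem_line hIA)
  exact ⟨t, AffineMap.lineMap_vsub_left A I t⟩

lemma mem_affineSpan_vertices (hQ : IsSecondIntersection O A I Q) (hI : IsIncenter A B C I)
    (hABC : AffineIndependent ℝ ![A, B, C]) : Q ∈ affineSpan ℝ {A, B, C} := by
  have hAC : A ≠ C := left_ne_right_of_affineIndependent hABC
  exact affineSpan_pair_le_of_mem_of_mem (mem_affineSpan ℝ (by simp))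
    (hI.mem_affineSpan_vertices hAC) (hQ.mem_line (hI.ne_left hABC))

lemma inner_vsub_vsub (hQ : IsSecondIntersection O A I Q) (hI : IsIncenter A B C I)
    (hABC : AffineIndependent ℝ ![A, B, C]) (hOB : dist O A = dist O B)
    (hOC : dist O A = dist O C) :
    ⟪Q -ᵥ A, B -ᵥ A⟫ = dist A B * (dist A B + dist C A) / 2 := by
  have inner_chord {X : P} (hX : dist O A = dist O X) :
      ⟪O -ᵥ A, X -ᵥ A⟫ = ‖X -ᵥ A‖ ^ 2 / 2 := by
    rw [inner_vsub_vsub_of_dist_eq hX, dist_eq_norm_vsub']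
  have hAC : A ≠ C := left_ne_right_of_affineIndependent hABC
  obtain ⟨t, ht⟩ := hQ.exists_vsub_eq_smul (hI.ne_left hABC)
  rw [hI.vsub_eq_smul_bisector hAC, smul_smul] at ht
  rw [dist_eq_norm_vsub', dist_eq_norm_vsub]
  exact inner_chord_of_eq_smul_bisector (vsub_ne_zero.mpr hQ.2.1) ht (inner_chord hOB)
    (inner_chord hOC) (inner_chord hQ.1.symm)

lemma dist_sq_add_mul (hQ : IsSecondIntersection O A I Q) (hI : IsIncenter A B C I)
    (hABC : AffineIndependent ℝ ![A, B, C]) (hOB : dist O A = dist O B)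
    (hOC : dist O A = dist O C) :
    dist Q B ^ 2 + dist A B * dist C A = dist Q A ^ 2 := by
  have law_of_cosines := norm_sub_sq_real (Q -ᵥ A) (B -ᵥ A)
  rw [vsub_sub_vsub_cancel_right, ← dist_eq_norm_vsub, ← dist_eq_norm_vsub, ← dist_eq_norm_vsub',
    hQ.inner_vsub_vsub hI hABC hOB hOC] at law_of_cosines
  linear_combination law_of_cosines

lemma dist_eq (hQ : IsSecondIntersection O A I Q) (hI : IsIncenter A B C I)
    (hABC : AffineIndependent ℝ ![A, B, C]) (hOB : dist O A = dist O B)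
    (hOC : dist O A = dist O C) : dist Q B = dist Q C := by
  have hB := hQ.dist_sq_add_mul hI hABC hOB hOC
  have hC := hQ.dist_sq_add_mul hI.swap.rotate hABC.comm_right hOC hOB
  rw [dist_comm A C, dist_comm B A] at hC
  exact (sq_eq_sq₀ dist_nonneg dist_nonneg).mp (by linear_combination hB - hC)

end IsSecondIntersection

lemma inner_sum_sub_incenter_eq_zero (hABC : AffineIndependent ℝ ![A, B, C])
    (hI : IsIncenter A B C I) (hOB : dist O A = dist O B) (hOC : dist O A = dist O C)
    (h₁ : IsSecondIntersection O A I A₁) (h₂ : IsSecondIntersection O B I A₂)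
    (h₃ : IsSecondIntersection O C I A₃) :
    ⟪(A₁ -ᵥ O) + (A₂ -ᵥ O) + (A₃ -ᵥ O) - (I -ᵥ O), B -ᵥ A⟫ = 0 := by
  have hAC : A ≠ C := left_ne_right_of_affineIndependent hABC
  have proj_O := inner_vsub_vsub_of_dist_eq hOB
  have proj_I := hI.inner_vsub_vsub hAC
  have proj_A₁ := h₁.inner_vsub_vsub hI hABC hOB hOC
  have proj_A₂ : ⟪A₂ -ᵥ B, B -ᵥ A⟫ = -(dist A B * (dist A B + dist B C) / 2) := by
    rw [← neg_vsub_eq_vsub_rev A B, inner_neg_right,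
      h₂.inner_vsub_vsub hI.swap hABC.comm_left hOB.symm (hOB.symm.trans hOC),
      dist_comm B A, dist_comm C B]
  have proj_A₃ := inner_vsub_vsub_of_dist_eq <|
    h₃.dist_eq hI.rotate.rotate hABC.comm_right.comm_left hOC.symm (hOC.symm.trans hOB)
  have proj_AB : ⟪B -ᵥ A, B -ᵥ A⟫ = dist A B ^ 2 := by
    rw [real_inner_self_eq_norm_sq, ← dist_eq_norm_vsub']
  have decomposition : (A₁ -ᵥ O) + (A₂ -ᵥ O) + (A₃ -ᵥ O) - (I -ᵥ O) =
      (A₁ -ᵥ A) + ((A₂ -ᵥ B) + (B -ᵥ A)) + (A₃ -ᵥ A) - (I -ᵥ A) - (2 : ℝ) • (O -ᵥ A) := by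
    rw [vsub_add_vsub_cancel, ← vsub_sub_vsub_cancel_right A₁ O A,
      ← vsub_sub_vsub_cancel_right A₂ O A, ← vsub_sub_vsub_cancel_right A₃ O A,
      ← vsub_sub_vsub_cancel_right I O A]
    module
  rw [decomposition]
  simp only [inner_add_left, inner_sub_left, real_inner_smul_left, proj_O, proj_I, proj_A₁,
    proj_A₂, proj_A₃, proj_AB]
  ring

lemma eq_zero_of_mem_vectorSpan_of_inner_eq_zero {x : V} (hx : x ∈ vectorSpan ℝ {A, B, C})
    (hAB : ⟪x, B -ᵥ A⟫ = 0) (hAC : ⟪x, C -ᵥ A⟫ = 0) : x = 0 := by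
  have span_le : vectorSpan ℝ {A, B, C} ≤ (ℝ ∙ x)ᗮ := by
    rw [vectorSpan_eq_span_vsub_set_right ℝ (Set.mem_insert A {B, C}), Submodule.span_le]
    rintro _ ⟨X, rfl | rfl | rfl, rfl⟩
    · simp
    · exact Submodule.mem_orthogonal_singleton_iff_inner_right.mpr hAB
    · exact Submodule.mem_orthogonal_singleton_iff_inner_right.mpr hAC
  exact inner_self_eq_zero.mp
    (Submodule.mem_orthogonal_singleton_iff_inner_right.mp (span_le hx))

theorem stmt18_general (hABC : AffineIndependent ℝ ![A, B, C])
    (hI : IsIncenter A B C I) (hO : O ∈ affineSpan ℝ {A, B, C}) (hOB : dist O A = dist O B)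
    (hOC : dist O A = dist O C) (h₁ : IsSecondIntersection O A I A₁)
    (h₂ : IsSecondIntersection O B I A₂) (h₃ : IsSecondIntersection O C I A₃) :
    (A₁ -ᵥ O) + (A₂ -ᵥ O) + (A₃ -ᵥ O) = I -ᵥ O := by
  have hAC : A ≠ C := left_ne_right_of_affineIndependent hABC
  have hBCA : ({B, C, A} : Set P) = {A, B, C} := by grind
  have hCAB : ({C, A, B} : Set P) = {A, B, C} := by grind
  have vsub_mem {X : P} (hX : X ∈ affineSpan ℝ {A, B, C}) : X -ᵥ O ∈ vectorSpan ℝ {A, B, C} :=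
    vsub_mem_vectorSpan_of_mem_affineSpan_of_mem_affineSpan hX hO
  have hA₁ := h₁.mem_affineSpan_vertices hI hABC
  have hA₂ := hBCA ▸ h₂.mem_affineSpan_vertices hI.rotate hABC.comm_left.comm_right
  have hA₃ := hCAB ▸ h₃.mem_affineSpan_vertices hI.rotate.rotate hABC.comm_right.comm_left
  refine sub_eq_zero.mp (eq_zero_of_mem_vectorSpan_of_inner_eq_zero (A := A) (B := B) (C := C)
    (sub_mem (add_mem (add_mem (vsub_mem hA₁) (vsub_mem hA₂)) (vsub_mem hA₃))
      (vsub_mem (hI.mem_affineSpan_vertices hAC))) ?_ ?_)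
  · exact inner_sum_sub_incenter_eq_zero hABC hI hOB hOC h₁ h₂ h₃
  · rw [← neg_vsub_eq_vsub_rev A C, inner_neg_right, neg_eq_zero, add_rotate, add_rotate]
    exact inner_sum_sub_incenter_eq_zero hABC.comm_right.comm_left hI.rotate.rotate hOC.symm
      (hOC.symm.trans hOB) h₃ h₁ h₂

end Triangle

lemma isIncenter_bary {A B C : EuclideanSpace ℝ (Fin 2)} (hAC : A ≠ C) :
    IsIncenter A B C (bary A B C (dist B C) (dist C A) (dist A B)) := by
  simp only [IsIncenter, bary, vsub_eq_sub]
  match_scalars <;> field_simp [(perimeter_pos B hAC).ne'] <;> ring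

theorem stmt18 (A B C O : EuclideanSpace ℝ (Fin 2))
    (hABC : AffineIndependent ℝ ![A, B, C])
    (a b c : ℝ) (ha : a = dist B C) (hb : b = dist C A) (hc : c = dist A B)
    (I A₁ A₂ A₃ : EuclideanSpace ℝ (Fin 2))
    (hI : I = bary A B C a b c)
    (hO : dist O A = dist O B ∧ dist O A = dist O C)
    (hA₁ : dist O A₁ = dist O A ∧ A₁ ≠ A ∧
      Collinear ℝ ({A, I, A₁} : Set (EuclideanSpace ℝ (Fin 2))))
    (hA₂ : dist O A₂ = dist O A ∧ A₂ ≠ B ∧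
      Collinear ℝ ({B, I, A₂} : Set (EuclideanSpace ℝ (Fin 2))))
    (hA₃ : dist O A₃ = dist O A ∧ A₃ ≠ C ∧
      Collinear ℝ ({C, I, A₃} : Set (EuclideanSpace ℝ (Fin 2)))) :
    A₁ + A₂ + A₃ - (2 : ℝ) • O = I := by
  subst ha hb hc hI
  have hAC : A ≠ C := left_ne_right_of_affineIndependent hABC
  have hO_mem : O ∈ affineSpan ℝ {A, B, C} := by
    simp [affineSpan_triangle_eq_top finrank_euclideanSpace_fin hABC]
  linear_combination (norm := (simp only [vsub_eq_sub]; module))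
    stmt18_general hABC (isIncenter_bary hAC) hO_mem hO.1 hO.2 hA₁ (hO.1 ▸ hA₂) (hO.2 ▸ hA₃)
end
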